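/- arXiv:2501.00690 — 4 statements merged into one kernel-verified Lean document; each statement's English description precedes it below -/
import Mathlib

section
/- For every solution (Z,Q) of the linearized symmetrized Boussinesq–Couette system at frequency (k,η) with k ≠ 0 and for every t ≥ 0, the following differential inequality holds: α·(d/dt)[ 𝔍(t)·(η − kt)²·(|Z(t)|² + |Q(t)|²) + (1/(2√R))·(p′(t)/(|k|·p(t)^{1/2}))·𝔍(t)·(η − kt)²·Re(Z(t)·conj(Q(t))) ] + α·(1/2 − 1/(4√R))·k²·(η − kt)²·p(t)^{−1}·(|Z(t)|² + |Q(t)|²) ≤ 16π·(R/ε)·α·μ·p(t)·(η − kt)²·(|Z(t)|² + |Q(t)|²) + (π/(8√R))·α·|k|³·(η − kt)²·p(t)^{−3/2}·(|Z(t)|² + |Q(t)|²) + (π/4)·(β·k²·(|Z(t)|² + |Q(t)|²))^{1/2}·(μ·p(t)·(|Z(t)|² + |Q(t)|²))^{1/2}. -/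
open Real MeasureTheory

noncomputable section

/-- The moving-frame Laplacian symbol `p(t) = k² + (η − kt)²`. -/
def pfun (k η t : ℝ) : ℝ := k ^ 2 + (η - k * t) ^ 2

/-- Its time derivative `p′(t) = −2k(η − kt)`. -/
def pder (k η t : ℝ) : ℝ := -(2 * k * (η - k * t))

/-- The symmetrizing weight `G(t) = p′(t)/(|k|·p(t)^{1/2})`. -/
def Gfun (k η t : ℝ) : ℝ := pder k η t / (|k| * Real.sqrt (pfun k η t))

/-- The exponential weight `N(t) = exp(−G(t)/(2√R − 1))`. -/
def Nfun (R k η t : ℝ) : ℝ := Real.exp (-(1 / (2 * Real.sqrt R - 1)) * Gfun k η t)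

/-- The inviscid damping multiplier `𝔍(t) = (1/2)·arctan(η/k − t)`. -/
def Jfun (k η t : ℝ) : ℝ := (1 / 2) * Real.arctan (η / k - t)

/-- The effective diffusivity `μ`. -/
def muDef (R ν κ : ℝ) : ℝ :=
  min ν κ * (1 - 1 / (4 * Real.sqrt R) - 1 / (4 * Real.sqrt R) * (max ν κ / min ν κ))

/-- The decay rate `λ`. -/
def lamDef (ν μ k : ℝ) : ℝ :=
  if μ ≤ |k| then μ ^ ((1 : ℝ) / 3) * |k| ^ ((2 : ℝ) / 3) else k ^ 2 / ν

/-- The weight `α`. -/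
def alphaDef (μ k : ℝ) : ℝ :=
  if |k| < μ then 1 else μ ^ ((2 : ℝ) / 3) * |k| ^ (-(2 : ℝ) / 3)

/-- The weight `β`. -/
def betaDef (μ k : ℝ) : ℝ :=
  if |k| < μ then μ⁻¹ else μ ^ ((1 : ℝ) / 3) * |k| ^ (-(4 : ℝ) / 3)

/-- `(Z, Q)` is a solution of the linearized symmetrized Boussinesq–Couette system
at frequency `(k, η)`. -/
def IsSol (R ν κ k η : ℝ) (Z Q : ℝ → ℂ) : Prop :=
  ∀ t : ℝ, 0 ≤ t →
    HasDerivAt Z ((((1 / 4) * (pder k η t / pfun k η t) : ℝ) : ℂ) * Z t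
        - ((Real.sqrt R * (|k| / Real.sqrt (pfun k η t)) : ℝ) : ℂ) * Q t
        - ((ν * pfun k η t : ℝ) : ℂ) * Z t) t ∧
    HasDerivAt Q (-(((1 / 4) * (pder k η t / pfun k η t) : ℝ) : ℂ) * Q t
        + ((Real.sqrt R * (|k| / Real.sqrt (pfun k η t)) : ℝ) : ℂ) * Z t
        - ((κ * pfun k η t : ℝ) : ℂ) * Q t) t

/-- The hypocoercive pointwise energy functional `E_k`. -/
def energy (R cτ cα cβ μ k η : ℝ) (Z Q : ℝ → ℂ) (t : ℝ) : ℝ :=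
  (Nfun R k η t + cτ * Jfun k η t) * (‖Z t‖ ^ 2 + ‖Q t‖ ^ 2)
    + 1 / (2 * Real.sqrt R) * Gfun k η t * (Nfun R k η t + cτ * Jfun k η t)
        * (Z t * (starRingEnd ℂ) (Q t)).re
    + cα * alphaDef μ k *
        ((Nfun R k η t + cτ * Jfun k η t) * (η - k * t) ^ 2 * (‖Z t‖ ^ 2 + ‖Q t‖ ^ 2)
          + 1 / (2 * Real.sqrt R) * Gfun k η t * (Nfun R k η t + cτ * Jfun k η t)
              * (η - k * t) ^ 2 * (Z t * (starRingEnd ℂ) (Q t)).re)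
    + cβ * betaDef μ k *
        (k * (η - k * t) * (‖Z t‖ ^ 2 + ‖Q t‖ ^ 2)
          - 1 / (2 * Real.sqrt R) * Gfun k η t * (k * (η - k * t))
              * (Z t * (starRingEnd ℂ) (Q t)).re)

/-- The pointwise dissipation functional `D_k`. -/
def dissip (R cτ cα cβ μ k η : ℝ) (Z Q : ℝ → ℂ) (t : ℝ) : ℝ :=
  μ * pfun k η t * (‖Z t‖ ^ 2 + ‖Q t‖ ^ 2)
    + cτ * (k ^ 2 / pfun k η t) * (‖Z t‖ ^ 2 + ‖Q t‖ ^ 2)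
    + cα * alphaDef μ k * μ * pfun k η t * (η - k * t) ^ 2 * (‖Z t‖ ^ 2 + ‖Q t‖ ^ 2)
    + cτ * cα * alphaDef μ k * (k ^ 2 * (η - k * t) ^ 2 / pfun k η t)
        * (‖Z t‖ ^ 2 + ‖Q t‖ ^ 2)
    + 1 / Real.sqrt R * (|k| ^ 3 / (pfun k η t * Real.sqrt (pfun k η t)))
        * (‖Z t‖ ^ 2 + ‖Q t‖ ^ 2)
    + cα / Real.sqrt R * alphaDef μ k
        * (|k| ^ 3 * (η - k * t) ^ 2 / (pfun k η t * Real.sqrt (pfun k η t)))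
        * (‖Z t‖ ^ 2 + ‖Q t‖ ^ 2)
    + cβ * betaDef μ k * k ^ 2 * (‖Z t‖ ^ 2 + ‖Q t‖ ^ 2)

lemma aux_pfun_pos (k η t : ℝ) (hk : k ≠ 0) : 0 < pfun k η t := by
  unfold pfun; positivity

lemma aux_J_bound (k η t : ℝ) : |Jfun k η t| ≤ π / 4 := by
  unfold Jfun
  rw [abs_le]
  constructor <;> linarith [Real.arctan_lt_pi_div_two (η / k - t), Real.neg_pi_div_two_lt_arctan (η / k - t)]

lemma aux_J_sign (k η t : ℝ) (hk : k ≠ 0) : 0 ≤ k * (η - k * t) * Jfun k η t := by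
  unfold Jfun
  have h : k * (η - k * t) = k ^ 2 * (η / k - t) := by field_simp
  rw [h]
  have : 0 ≤ (η / k - t) * Real.arctan (η / k - t) := by
    rcases le_total 0 (η / k - t) with h0 | h0
    · exact mul_nonneg h0 (Real.arctan_nonneg.2 h0)
    · exact mul_nonneg_of_nonpos_of_nonpos h0 (by
        simpa using Real.arctan_strictMono.monotone h0)
  nlinarith [sq_nonneg k, mul_nonneg (sq_nonneg k) this]

lemma aux_J_deriv (k η t : ℝ) (hk : k ≠ 0) :
    HasDerivAt (Jfun k η) (-(1 / 2) * (k ^ 2 / pfun k η t)) t := by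
  have h1 : HasDerivAt (fun s : ℝ => η / k - s) (-1) t := by
    simpa using (hasDerivAt_id t).const_sub (η / k)
  have h2 := (h1.arctan).const_mul (1 / 2 : ℝ)
  refine h2.congr_deriv ?_
  have hp := aux_pfun_pos k η t hk
  have : 1 + (η / k - t) ^ 2 = pfun k η t / k ^ 2 := by
    unfold pfun; field_simp
  rw [this]
  field_simp

lemma aux_x_deriv (k η t : ℝ) : HasDerivAt (fun s : ℝ => η - k * s) (-k) t := by
  simpa using ((hasDerivAt_id t).const_mul k).const_sub η

lemma aux_x2_deriv (k η t : ℝ) :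
    HasDerivAt (fun s : ℝ => (η - k * s) ^ 2) (-2 * k * (η - k * t)) t := by
  refine ((aux_x_deriv k η t).pow 2).congr_deriv ?_
  push_cast; ring

lemma aux_G_deriv (k η t : ℝ) (hk : k ≠ 0) :
    HasDerivAt (Gfun k η) (2 * (|k| ^ 3 / (pfun k η t * Real.sqrt (pfun k η t)))) t := by
  have hp := aux_pfun_pos k η t hk
  have hu : 0 < |k| := abs_pos.2 hk
  have hq := Real.sqrt_pos.2 hp
  have hpd : HasDerivAt (pfun k η) (-2 * k * (η - k * t)) t :=
    (aux_x2_deriv k η t).const_add (k ^ 2)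
  have hpd2 : HasDerivAt (pder k η) (2 * k ^ 2) t := by
    refine (((aux_x_deriv k η t).const_mul (2 * k)).neg).congr_deriv ?_
    ring
  have hs := (hpd.sqrt hp.ne').const_mul |k|
  have h := hpd2.div hs (by positivity)
  refine h.congr_deriv ?_
  have hqq : Real.sqrt (pfun k η t) ^ 2 = pfun k η t := Real.sq_sqrt hp.le
  have hpe : pfun k η t = k ^ 2 + (η - k * t) ^ 2 := rfl
  have hde : pder k η t = -(2 * k * (η - k * t)) := rfl
  rw [hde]
  have huu : |k| ^ 2 = k ^ 2 := sq_abs k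
  set q := Real.sqrt (pfun k η t) with hqdef
  set u := |k| with hudef
  set x := η - k * t with hxdef
  rw [← hqq]
  have hx2 : x ^ 2 = q ^ 2 - u ^ 2 := by rw [hqq, hpe, huu]; ring
  field_simp
  rw [← huu, hx2]
  ring

lemma aux_G_bound (k η t : ℝ) (hk : k ≠ 0) : |Gfun k η t| ≤ 2 := by
  have hp := aux_pfun_pos k η t hk
  have hu : 0 < |k| := abs_pos.2 hk
  have hq := Real.sqrt_pos.2 hp
  unfold Gfun pder
  rw [abs_div, abs_neg, abs_mul, abs_mul, abs_mul, abs_abs, abs_of_pos hq, abs_two,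
    div_le_iff₀ (by positivity)]
  have : |η - k * t| ≤ Real.sqrt (pfun k η t) := by
    apply Real.abs_le_sqrt; unfold pfun; nlinarith [sq_nonneg k]
  nlinarith

lemma aux_W_bound (z w : ℂ) :
    (‖w‖ ^ 2 - ‖z‖ ^ 2) ^ 2 + (2 * (z * (starRingEnd ℂ) w).re) ^ 2 ≤ (‖z‖ ^ 2 + ‖w‖ ^ 2) ^ 2 := by
  rw [← Complex.normSq_eq_norm_sq, ← Complex.normSq_eq_norm_sq]
  simp only [Complex.normSq_apply, Complex.mul_re, Complex.conj_re, Complex.conj_im]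
  nlinarith [sq_nonneg (z.re * w.im - z.im * w.re)]

lemma aux_normsq_deriv (Z : ℝ → ℂ) (z' : ℂ) (t : ℝ) (h : HasDerivAt Z z' t) :
    HasDerivAt (fun s => ‖Z s‖ ^ 2) (2 * ((Z t).re * z'.re + (Z t).im * z'.im)) t := by
  have h1 : HasDerivAt (fun s => (Z s).re) z'.re t := Complex.reCLM.hasFDerivAt.comp_hasDerivAt t h
  have h2 : HasDerivAt (fun s => (Z s).im) z'.im t := Complex.imCLM.hasFDerivAt.comp_hasDerivAt t h
  have e : (fun s => ‖Z s‖ ^ 2) = fun s => (Z s).re * (Z s).re + (Z s).im * (Z s).im := by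
    funext s; rw [← Complex.normSq_eq_norm_sq, Complex.normSq_apply]
  rw [e]
  refine ((h1.mul h1).add (h2.mul h2)).congr_deriv ?_
  ring

lemma aux_cross_deriv (Z Q : ℝ → ℂ) (z' w' : ℂ) (t : ℝ) (h : HasDerivAt Z z' t)
    (h' : HasDerivAt Q w' t) :
    HasDerivAt (fun s => (Z s * (starRingEnd ℂ) (Q s)).re)
      (z'.re * (Q t).re + (Z t).re * w'.re + (z'.im * (Q t).im + (Z t).im * w'.im)) t := by
  have h1 : HasDerivAt (fun s => (Z s).re) z'.re t := Complex.reCLM.hasFDerivAt.comp_hasDerivAt t h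
  have h2 : HasDerivAt (fun s => (Z s).im) z'.im t := Complex.imCLM.hasFDerivAt.comp_hasDerivAt t h
  have h3 : HasDerivAt (fun s => (Q s).re) w'.re t := Complex.reCLM.hasFDerivAt.comp_hasDerivAt t h'
  have h4 : HasDerivAt (fun s => (Q s).im) w'.im t := Complex.imCLM.hasFDerivAt.comp_hasDerivAt t h'
  have e : (fun s => (Z s * (starRingEnd ℂ) (Q s)).re)
      = fun s => (Z s).re * (Q s).re + (Z s).im * (Q s).im := by
    funext s; simp [Complex.mul_re]
  rw [e]
  exact (h1.mul h3).add (h2.mul h4)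

/-- Derivative of the functional, computed along a solution. -/
lemma aux_F_deriv (R ν κ k η : ℝ) (hR : 1 / 4 < R) (hk : k ≠ 0)
    (Z Q : ℝ → ℂ) (hsol : IsSol R ν κ k η Z Q) (t : ℝ) (ht : 0 ≤ t) (F' : ℝ)
    (hF : HasDerivAt (fun s =>
          Jfun k η s * (η - k * s) ^ 2 * (‖Z s‖ ^ 2 + ‖Q s‖ ^ 2)
            + 1 / (2 * Real.sqrt R) * Gfun k η s * Jfun k η s * (η - k * s) ^ 2
                * (Z s * (starRingEnd ℂ) (Q s)).re) F' t) :
    F' = (-(1 / 2) * (k ^ 2 / pfun k η t) * (η - k * t) ^ 2) *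
          ((‖Z t‖ ^ 2 + ‖Q t‖ ^ 2)
            + 1 / (2 * Real.sqrt R) * Gfun k η t * (Z t * (starRingEnd ℂ) (Q t)).re)
      + 1 / (2 * Real.sqrt R) * (2 * (|k| ^ 3 / (pfun k η t * Real.sqrt (pfun k η t))))
          * Jfun k η t * (η - k * t) ^ 2 * (Z t * (starRingEnd ℂ) (Q t)).re
      + 2 * (k * (η - k * t) * Jfun k η t) *
          (-(‖Z t‖ ^ 2 + ‖Q t‖ ^ 2)
            - 1 / (2 * Real.sqrt R) * Gfun k η t * (Z t * (starRingEnd ℂ) (Q t)).re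
            + (η - k * t) ^ 2 / pfun k η t * (‖Q t‖ ^ 2 - ‖Z t‖ ^ 2))
      + Jfun k η t * (η - k * t) ^ 2 * pfun k η t *
          (-2 * ν * ‖Z t‖ ^ 2 - 2 * κ * ‖Q t‖ ^ 2
            - 1 / (2 * Real.sqrt R) * Gfun k η t * (ν + κ) * (Z t * (starRingEnd ℂ) (Q t)).re) := by
  obtain ⟨hZ, hQ⟩ := hsol t ht
  have hJ := aux_J_deriv k η t hk
  have hx := aux_x2_deriv k η t
  have hG := aux_G_deriv k η t hk
  have hA := aux_normsq_deriv Z _ t hZ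
  have hB := aux_normsq_deriv Q _ t hQ
  have hW := aux_cross_deriv Z Q _ _ t hZ hQ
  have hD := ((hJ.mul hx).mul (hA.add hB)).add
    ((((hG.const_mul (1 / (2 * Real.sqrt R))).mul hJ).mul hx).mul hW)
  have hu := hF.unique hD
  rw [hu]
  have hp := aux_pfun_pos k η t hk
  have hq := Real.sqrt_pos.2 hp
  have hqq : Real.sqrt (pfun k η t) ^ 2 = pfun k η t := Real.sq_sqrt hp.le
  have hr : 0 < Real.sqrt R := Real.sqrt_pos.2 (by linarith)
  have huk : 0 < |k| := abs_pos.2 hk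
  have hGe : 1 / (2 * Real.sqrt R) * Gfun k η t * (Real.sqrt R * (|k| / Real.sqrt (pfun k η t)))
      = (1 / 2) * (pder k η t / pfun k η t) := by
    unfold Gfun
    rw [div_eq_div_iff hp.ne' hp.ne' |>.2 rfl]
    conv_rhs => rw [← hqq]
    field_simp
  have hpd : pder k η t / pfun k η t = - 2 * (k * (η - k * t)) / pfun k η t := by
    unfold pder; ring
  have hA' : ‖Z t‖ ^ 2 = (Z t).re ^ 2 + (Z t).im ^ 2 := by
    rw [← Complex.normSq_eq_norm_sq, Complex.normSq_apply]; ring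
  have hB' : ‖Q t‖ ^ 2 = (Q t).re ^ 2 + (Q t).im ^ 2 := by
    rw [← Complex.normSq_eq_norm_sq, Complex.normSq_apply]; ring
  rw [← Complex.ofReal_neg]
  simp only [Pi.mul_apply, Pi.add_apply, hA', hB', Complex.sub_re, Complex.sub_im, Complex.add_re, Complex.add_im,
    Complex.mul_re, Complex.mul_im,
    Complex.ofReal_re, Complex.ofReal_im, Complex.conj_re, Complex.conj_im]
  have hd : k * (η - k * t) * Jfun k η t * ((η - k * t) ^ 2 / pfun k η t)
      = -(1 / 2) * (pder k η t / pfun k η t) * Jfun k η t * (η - k * t) ^ 2 := by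
    rw [hpd]; ring
  generalize pder k η t / pfun k η t = d at *
  generalize Real.sqrt R * (|k| / Real.sqrt (pfun k η t)) = c at *
  generalize 1 / (2 * Real.sqrt R) = r at *
  generalize Gfun k η t = G at *
  generalize Jfun k η t = J at *
  generalize |k| ^ 3 / (pfun k η t * Real.sqrt (pfun k η t)) = e at *
  generalize hy : (η - k * t) ^ 2 / pfun k η t = y at *
  generalize k ^ 2 / pfun k η t = v at *
  generalize pfun k η t = p at *
  generalize η - k * t = x at *
  generalize (Z t).re = a at *
  generalize (Z t).im = b at *
  generalize (Q t).re = m at *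
  generalize (Q t).im = n at *
  linear_combination (J * x ^ 2 * (a ^ 2 + b ^ 2 - m ^ 2 - n ^ 2)) * hGe
    - 2 * (m ^ 2 + n ^ 2 - a ^ 2 - b ^ 2) * hd

lemma aux_mu (R ε ν κ : ℝ) (hR : 1 / 4 < R) (hε : 0 < ε) (hν : 0 < ν) (hκ : 0 < κ)
    (hratio : max ν κ / min ν κ ≤ 4 * Real.sqrt R - 1 - ε) :
    0 < muDef R ν κ ∧ max ν κ ≤ 16 * (R / ε) * muDef R ν κ := by
  have hr : 0 < Real.sqrt R := Real.sqrt_pos.2 (by linarith)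
  have hrr : Real.sqrt R ^ 2 = R := Real.sq_sqrt (by linarith)
  have hm : 0 < min ν κ := lt_min hν hκ
  unfold muDef
  set r := Real.sqrt R
  set m := min ν κ
  set M := max ν κ
  have e : m * (1 - 1 / (4 * r) - 1 / (4 * r) * (M / m)) = m / (4 * r) * (4 * r - 1 - M / m) := by
    field_simp
  have h1 : m / (4 * r) * ε ≤ m * (1 - 1 / (4 * r) - 1 / (4 * r) * (M / m)) := by
    rw [e]; apply mul_le_mul_of_nonneg_left _ (by positivity); linarith
  refine ⟨lt_of_lt_of_le (by positivity) h1, ?_⟩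
  have h2 : M ≤ (4 * r - 1 - ε) * m := (div_le_iff₀ hm).1 hratio
  have h3 : 16 * (R / ε) * (m / (4 * r) * ε) = 4 * r * m := by
    rw [← hrr]; field_simp; norm_num
  have hRp : 0 < R := by linarith
  calc M ≤ 4 * r * m := by nlinarith
    _ = _ := h3.symm
    _ ≤ _ := mul_le_mul_of_nonneg_left h1 (by positivity)

lemma aux_alpha_beta (μ k : ℝ) (hμ : 0 < μ) (hk : k ≠ 0) :
    0 < alphaDef μ k ∧ 0 < betaDef μ k ∧ betaDef μ k * μ = alphaDef μ k ^ 2 := by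
  have hu : 0 < |k| := abs_pos.2 hk
  unfold alphaDef betaDef
  split_ifs with h
  · refine ⟨one_pos, by positivity, ?_⟩
    field_simp
  · refine ⟨by positivity, by positivity, ?_⟩
    rw [mul_pow, ← Real.rpow_natCast, ← Real.rpow_natCast, ← Real.rpow_mul hμ.le,
      ← Real.rpow_mul hu.le, mul_right_comm]
    nth_rewrite 2 [← Real.rpow_one μ]
    rw [← Real.rpow_add hμ]
    norm_num

lemma aux_last (μ k p S : ℝ) (hμ : 0 < μ) (hk : k ≠ 0) (hp : 0 < p) (hS : 0 ≤ S) :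
    Real.sqrt (betaDef μ k * k ^ 2 * S) * Real.sqrt (μ * p * S)
      = alphaDef μ k * (|k| * Real.sqrt p * S) := by
  obtain ⟨ha, hb, hab⟩ := aux_alpha_beta μ k hμ hk
  rw [← Real.sqrt_mul (by positivity)]
  have : betaDef μ k * k ^ 2 * S * (μ * p * S) = (alphaDef μ k * (|k| * Real.sqrt p * S)) ^ 2 := by
    rw [mul_pow, mul_pow, mul_pow, sq_abs, Real.sq_sqrt hp.le, ← hab]; ring
  rw [this, Real.sqrt_sq (by positivity)]

set_option maxHeartbeats 1000000 in
/-- Lemma, τα-estimate: for every solution `(Z,Q)` of the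
linearized symmetrized system and every `t ≥ 0`,
`α·(d/dt)[𝔍·(η−kt)²·(|Z|²+|Q|²) + (1/(2√R))·G·𝔍·(η−kt)²·Re(Z·conj Q)]
 + α·(1/2 − 1/(4√R))·k²·(η−kt)²·p⁻¹·(|Z|²+|Q|²)
 ≤ 16π·(R/ε)·α·μ·p·(η−kt)²·(|Z|²+|Q|²) + (π/(8√R))·α·|k|³·(η−kt)²·p^{−3/2}·(|Z|²+|Q|²)
   + (π/4)·(β·k²·(|Z|²+|Q|²))^{1/2}·(μ·p·(|Z|²+|Q|²))^{1/2}`. -/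
theorem stmt6 (R ε ν κ k η : ℝ) (hR : 1 / 4 < R) (hε : ε ∈ Set.Ioo (0 : ℝ) (1 / 2))
    (hν : ν ∈ Set.Ioo (0 : ℝ) 1) (hκ : κ ∈ Set.Ioo (0 : ℝ) 1)
    (hratio : max ν κ / min ν κ ≤ 4 * Real.sqrt R - 1 - ε) (hk : k ≠ 0)
    (Z Q : ℝ → ℂ) (hsol : IsSol R ν κ k η Z Q) :
    ∀ t : ℝ, 0 ≤ t → ∀ F' : ℝ,
      HasDerivAt (fun s =>
          Jfun k η s * (η - k * s) ^ 2 * (‖Z s‖ ^ 2 + ‖Q s‖ ^ 2)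
            + 1 / (2 * Real.sqrt R) * Gfun k η s * Jfun k η s * (η - k * s) ^ 2
                * (Z s * (starRingEnd ℂ) (Q s)).re) F' t →
      alphaDef (muDef R ν κ) k * F'
          + alphaDef (muDef R ν κ) k * (1 / 2 - 1 / (4 * Real.sqrt R))
              * (k ^ 2 * (η - k * t) ^ 2 / pfun k η t) * (‖Z t‖ ^ 2 + ‖Q t‖ ^ 2)
        ≤ 16 * π * (R / ε) * alphaDef (muDef R ν κ) k * muDef R ν κ * pfun k η t
              * (η - k * t) ^ 2 * (‖Z t‖ ^ 2 + ‖Q t‖ ^ 2)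
          + π / (8 * Real.sqrt R) * alphaDef (muDef R ν κ) k
              * (|k| ^ 3 * (η - k * t) ^ 2 / (pfun k η t * Real.sqrt (pfun k η t)))
              * (‖Z t‖ ^ 2 + ‖Q t‖ ^ 2)
          + π / 4 * Real.sqrt (betaDef (muDef R ν κ) k * k ^ 2 * (‖Z t‖ ^ 2 + ‖Q t‖ ^ 2))
              * Real.sqrt (muDef R ν κ * pfun k η t * (‖Z t‖ ^ 2 + ‖Q t‖ ^ 2)) := by
  intro t ht F' hF
  have hF' := aux_F_deriv R ν κ k η hR hk Z Q hsol t ht F' hF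
  obtain ⟨hμ, hM⟩ := aux_mu R ε ν κ hR hε.1 hν.1 hκ.1 hratio
  obtain ⟨ha, -, -⟩ := aux_alpha_beta _ k hμ hk
  have hp := aux_pfun_pos k η t hk
  have hq := Real.sqrt_pos.2 hp
  have hu : 0 < |k| := abs_pos.2 hk
  have hS : 0 ≤ ‖Z t‖ ^ 2 + ‖Q t‖ ^ 2 := by positivity
  have hlast := aux_last _ k _ _ hμ hk hp hS
  have hr2 : 1 / 2 < Real.sqrt R := Real.lt_sqrt_of_sq_lt (by norm_num; linarith)
  have hJb := aux_J_bound k η t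
  have hJs := aux_J_sign k η t hk
  have hGb := aux_G_bound k η t hk
  have hWb := aux_W_bound (Z t) (Q t)
  have hxq : |η - k * t| ≤ Real.sqrt (pfun k η t) := by
    apply Real.abs_le_sqrt; unfold pfun; nlinarith [sq_nonneg k]
  have hy1 : (η - k * t) ^ 2 / pfun k η t ≤ 1 := by
    rw [div_le_one hp]; unfold pfun; nlinarith [sq_nonneg k]
  have hy0 : 0 ≤ (η - k * t) ^ 2 / pfun k η t := by positivity
  have hA : 0 ≤ ‖Z t‖ ^ 2 := by positivity
  have hB : 0 ≤ ‖Q t‖ ^ 2 := by positivity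
  rw [mul_assoc (π / 4), hlast, hF']
  have hr1 : 1 / (2 * Real.sqrt R) ≤ 1 := by
    rw [div_le_one (by linarith)]; linarith
  have hr0 : 0 < 1 / (2 * Real.sqrt R) := by positivity
  have e1 : 1 / (4 * Real.sqrt R) = 1 / (2 * Real.sqrt R) / 2 := by
    field_simp; norm_num
  have e2 : π / (8 * Real.sqrt R) = π / 4 * (1 / (2 * Real.sqrt R)) := by
    field_simp; norm_num
  rw [e1, e2]
  have hνM : ν ≤ max ν κ := le_max_left _ _
  have hκM : κ ≤ max ν κ := le_max_right _ _
  have hν0 := hν.1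
  have hκ0 := hκ.1
  have hv : 0 ≤ k ^ 2 * (η - k * t) ^ 2 / pfun k η t := by positivity
  have hv' : k ^ 2 / pfun k η t * (η - k * t) ^ 2 = k ^ 2 * (η - k * t) ^ 2 / pfun k η t := by ring
  have he : 0 ≤ |k| ^ 3 * (η - k * t) ^ 2 / (pfun k η t * Real.sqrt (pfun k η t)) := by positivity
  have he' : |k| ^ 3 / (pfun k η t * Real.sqrt (pfun k η t)) * (η - k * t) ^ 2 = |k| ^ 3 * (η - k * t) ^ 2 / (pfun k η t * Real.sqrt (pfun k η t)) := by ring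
  have hxx : 0 ≤ (η - k * t) ^ 2 := sq_nonneg _
  have hyq : k * (η - k * t) * Jfun k η t ≤ π / 4 * (|k| * Real.sqrt (pfun k η t)) := by
    calc k * (η - k * t) * Jfun k η t ≤ |k * (η - k * t) * Jfun k η t| := le_abs_self _
      _ = |k| * |η - k * t| * |Jfun k η t| := by rw [abs_mul, abs_mul]
      _ ≤ |k| * Real.sqrt (pfun k η t) * (π / 4) := by gcongr
      _ = _ := by ring
  clear hlast hF hF' hsol e1 e2 hratio
  have hpi := Real.pi_pos
  generalize (Z t * (starRingEnd ℂ) (Q t)).re = W at *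
  generalize ‖Z t‖ ^ 2 = A at *
  generalize ‖Q t‖ ^ 2 = B at *
  generalize 1 / (2 * Real.sqrt R) = r at *
  generalize Gfun k η t = G at *
  generalize hJJ : Jfun k η t = J at *
  generalize muDef R ν κ = μ at *
  generalize alphaDef μ k = α at *
  generalize max ν κ = M at *
  have hW : |W| ≤ (A + B) / 2 := by
    apply abs_le_of_sq_le_sq _ (by linarith)
    linarith only [sq_nonneg (B - A), hWb]
  have hAB : |B - A| + 2 * |W| ≤ 3 / 2 * (A + B) := by
    apply abs_le_of_sq_le_sq' _ (by linarith) |>.2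
    linarith only [hWb, sq_abs (B - A), sq_abs W, sq_nonneg (|B - A| - 2 * |W|), mul_nonneg hS hS]
  have hGW : |r * G * W| ≤ 2 * r * |W| := by
    rw [abs_mul, abs_mul, abs_of_pos hr0]
    have := abs_nonneg W
    nlinarith [mul_le_mul_of_nonneg_right hGb (mul_nonneg hr0.le this)]
  have hGW1 : |r * G * W| ≤ 2 * |W| := by nlinarith [abs_nonneg W]
  have hGWS : |r * G * W| ≤ r * (A + B) := by nlinarith
  -- T1
  have T1 : (-(1 / 2) * (k ^ 2 / pfun k η t) * (η - k * t) ^ 2) * ((A + B) + r * G * W)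
      + (1 / 2 - r / 2) * (k ^ 2 * (η - k * t) ^ 2 / pfun k η t) * (A + B) ≤ 0 := by
    rw [mul_assoc (-(1 / 2) : ℝ), hv']
    nlinarith [mul_le_mul_of_nonneg_left ((neg_le_abs (r * G * W)).trans hGWS) hv]
  -- T2
  have T2 : r * (2 * (|k| ^ 3 / (pfun k η t * Real.sqrt (pfun k η t)))) * J * (η - k * t) ^ 2 * W
      ≤ π / 4 * r * (|k| ^ 3 * (η - k * t) ^ 2 / (pfun k η t * Real.sqrt (pfun k η t))) * (A + B) := by
    rw [← he'] at he ⊢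
    have hJW : J * W ≤ π / 4 * ((A + B) / 2) := by
      calc J * W ≤ |J * W| := le_abs_self _
        _ = |J| * |W| := abs_mul _ _
        _ ≤ _ := by gcongr
    have := mul_le_mul_of_nonneg_left hJW (mul_nonneg hr0.le he)
    linarith
  -- T3
  have T3 : 2 * (k * (η - k * t) * J) *
          (-(A + B) - r * G * W + (η - k * t) ^ 2 / pfun k η t * (B - A))
      ≤ π / 4 * (|k| * Real.sqrt (pfun k η t) * (A + B)) := by
    have h1 : (η - k * t) ^ 2 / pfun k η t * (B - A) ≤ |B - A| := by
      nlinarith [le_abs_self (B - A), abs_nonneg (B - A)]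
    have h2 : -(A + B) - r * G * W + (η - k * t) ^ 2 / pfun k η t * (B - A) ≤ (A + B) / 2 := by
      linarith [neg_le_abs (r * G * W)]
    have h3 := mul_le_mul_of_nonneg_left h2 hJs
    have h4 := mul_le_mul_of_nonneg_right hyq hS
    linarith
  -- T4
  have T4 : J * (η - k * t) ^ 2 * pfun k η t *
          (-2 * ν * A - 2 * κ * B - r * G * (ν + κ) * W)
      ≤ 16 * π * (R / ε) * μ * pfun k η t * (η - k * t) ^ 2 * (A + B) := by
    have hY : |(-2 * ν * A - 2 * κ * B - r * G * (ν + κ) * W)| ≤ 4 * M * (A + B) := by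
      have hS1 : |r * G * W| ≤ A + B := by nlinarith
      have hM0 : 0 ≤ M := by linarith
      have h5 : |r * G * (ν + κ) * W| ≤ 2 * M * (A + B) := by
        have : r * G * (ν + κ) * W = (ν + κ) * (r * G * W) := by ring
        rw [this, abs_mul, abs_of_pos (by linarith)]
        apply mul_le_mul (by linarith) hS1 (abs_nonneg _) (by linarith)
      have h6 := abs_le.1 h5
      have h7 := mul_le_mul_of_nonneg_right hνM hA
      have h8 := mul_le_mul_of_nonneg_right hκM hB
      have h9 := mul_nonneg hν0.le hA
      have h10 := mul_nonneg hκ0.le hB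
      have h11 := mul_nonneg hM0 hS
      rw [abs_le]
      constructor <;> linarith
    have hJY : J * (-2 * ν * A - 2 * κ * B - r * G * (ν + κ) * W) ≤ π / 4 * (4 * M * (A + B)) := by
      calc _ ≤ |J * (-2 * ν * A - 2 * κ * B - r * G * (ν + κ) * W)| := le_abs_self _
        _ = _ := abs_mul _ _
        _ ≤ _ := by gcongr
    have h12 := mul_le_mul_of_nonneg_left hJY (mul_nonneg hxx hp.le)
    have h13 := mul_le_mul_of_nonneg_left hM
      (mul_nonneg (mul_nonneg (mul_nonneg hxx hp.le) hS) hpi.le)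
    linarith only [h12, h13]
  have := mul_le_mul_of_nonneg_left (add_le_add (add_le_add (add_le_add T1 T2) T3) T4) ha.le
  linarith only [this]
end
end

section
/- Let R > 1/4 and let k ≠ 0, η be real numbers. Set p(t) := k² + (η − kt)² for t ≥ 0. Let Ω, Θ : [0,∞) → ℂ be differentiable functions satisfying the inviscid linearized Boussinesq–Couette system in the moving frame at frequency (k,η): Ω′(t) = −R·i·k·Θ(t) and Θ′(t) = −(i·k/p(t))·Ω(t). Then there exist constants 0 < C₁ ≤ C₂ depending only on R (independent of k, η, t and the solution) such that for all t ≥ 0: C₁·[ (k² + η²)^{−1/2}·|Ω(0)|² + (k² + η²)^{1/2}·|Θ(0)|² ] ≤ p(t)^{−1/2}·|Ω(t)|² + p(t)^{1/2}·|Θ(t)|² ≤ C₂·[ (k² + η²)^{−1/2}·|Ω(0)|² + (k² + η²)^{1/2}·|Θ(0)|² ]. -/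
open Real MeasureTheory

noncomputable section

lemma aux_pos {k : ℝ} (hk : k ≠ 0) (η t : ℝ) : 0 < pfun k η t := by
  unfold pfun; positivity

lemma aux_quad {w s a b c d : ℝ} (hw : 0 < w) (hs : 0 < s) :
    |a * d - b * c| ≤ 1 / (2 * w) * ((a ^ 2 + b ^ 2) / s + w ^ 2 * s * (c ^ 2 + d ^ 2)) := by
  have e : 1 / (2 * w) * ((a ^ 2 + b ^ 2) / s + w ^ 2 * s * (c ^ 2 + d ^ 2))
      = ((a ^ 2 + b ^ 2) + (w * s) ^ 2 * (c ^ 2 + d ^ 2)) / (2 * (w * s)) := by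
    field_simp
  have hws : 0 < w * s := by positivity
  rw [e, le_div_iff₀ (by positivity)]
  generalize w * s = v at *
  rcases abs_cases (a * d - b * c) with h | h <;> rw [h.1]
  · nlinarith [sq_nonneg (a - v * d), sq_nonneg (b + v * c)]
  · nlinarith [sq_nonneg (a + v * d), sq_nonneg (b - v * c)]

lemma aux_g {k : ℝ} (hk : k ≠ 0) (η t : ℝ) :
    HasDerivAt (fun t => -(η - k * t) / √(pfun k η t)) (k ^ 3 / √(pfun k η t) ^ 3) t := by
  have hp := aux_pos hk η t
  have h1 : HasDerivAt (fun t => η - k * t) (-k) t := by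
    simpa using ((hasDerivAt_id t).const_mul k).const_sub η
  have h2 : HasDerivAt (fun t => pfun k η t) (2 * (η - k * t) * (-k)) t := by
    simpa [pfun] using (h1.pow 2).const_add (k ^ 2)
  have h3 := h2.sqrt hp.ne'
  have hs : 0 < √(pfun k η t) := Real.sqrt_pos.2 hp
  refine (h1.neg.div h3 hs.ne').congr_deriv ?_
  have hq : √(pfun k η t) ^ 2 = k ^ 2 + (η - k * t) ^ 2 := Real.sq_sqrt hp.le
  simp only [Pi.neg_apply]
  generalize √(pfun k η t) = s at *
  field_simp
  linear_combination hq

lemma aux_s {k : ℝ} (hk : k ≠ 0) (η t : ℝ) :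
    HasDerivAt (fun t => √(pfun k η t)) (-(k * (η - k * t)) / √(pfun k η t)) t := by
  have hp := aux_pos hk η t
  have h1 : HasDerivAt (fun t => η - k * t) (-k) t := by
    simpa using ((hasDerivAt_id t).const_mul k).const_sub η
  have h2 : HasDerivAt (fun t => pfun k η t) (2 * (η - k * t) * (-k)) t := by
    simpa [pfun] using (h1.pow 2).const_add (k ^ 2)
  have hs : 0 < √(pfun k η t) := Real.sqrt_pos.2 hp
  refine (h2.sqrt hp.ne').congr_deriv ?_
  field_simp

lemma aux_g_abs {k : ℝ} (hk : k ≠ 0) (η t : ℝ) : |-(η - k * t) / √(pfun k η t)| ≤ 1 := by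
  have hp := aux_pos hk η t
  have hs : 0 < √(pfun k η t) := Real.sqrt_pos.2 hp
  rw [abs_div, abs_of_pos hs, div_le_one hs, abs_neg]
  apply Real.abs_le_sqrt
  unfold pfun; nlinarith [sq_nonneg k]

def auxT (w k η : ℝ) (a b c d : ℝ → ℝ) (t : ℝ) : ℝ :=
  (a t ^ 2 + b t ^ 2) / √(pfun k η t) + w ^ 2 * √(pfun k η t) * (c t ^ 2 + d t ^ 2)

def auxE (w k η : ℝ) (a b c d : ℝ → ℝ) (t : ℝ) : ℝ :=
  auxT w k η a b c d t - (-(η - k * t) / √(pfun k η t)) * (a t * d t - b t * c t)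

lemma aux_E_bounds {w k : ℝ} (hw : 0 < w) (hk : k ≠ 0) (η : ℝ) (a b c d : ℝ → ℝ) (t : ℝ) :
    (1 - 1 / (2 * w)) * auxT w k η a b c d t ≤ auxE w k η a b c d t ∧
    auxE w k η a b c d t ≤ (1 + 1 / (2 * w)) * auxT w k η a b c d t := by
  have hs : 0 < √(pfun k η t) := Real.sqrt_pos.2 (aux_pos hk η t)
  have h1 := aux_quad (a := a t) (b := b t) (c := c t) (d := d t) hw hs
  have h2 : |(-(η - k * t) / √(pfun k η t)) * (a t * d t - b t * c t)|
      ≤ 1 / (2 * w) * auxT w k η a b c d t := by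
    rw [abs_mul]
    calc _ ≤ 1 * |a t * d t - b t * c t| :=
          mul_le_mul_of_nonneg_right (aux_g_abs hk η t) (abs_nonneg _)
      _ ≤ _ := by rw [one_mul]; exact h1
  have h3 := abs_le.1 h2
  unfold auxE
  constructor <;> linarith [h3.1, h3.2]

lemma aux_E_deriv {w k : ℝ} (hk : k ≠ 0) (η : ℝ) (a b c d : ℝ → ℝ) (t : ℝ)
    (ha : HasDerivAt a (w ^ 2 * k * d t) t) (hb : HasDerivAt b (-(w ^ 2 * k * c t)) t)
    (hc : HasDerivAt c (k / pfun k η t * b t) t)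
    (hd : HasDerivAt d (-(k / pfun k η t * a t)) t) :
    HasDerivAt (auxE w k η a b c d)
      (-(k ^ 3 / √(pfun k η t) ^ 3 * (a t * d t - b t * c t))) t := by
  have hp := aux_pos hk η t
  have hs : 0 < √(pfun k η t) := Real.sqrt_pos.2 hp
  have hS := aux_s hk η t
  have hg := aux_g hk η t
  have h := ((((ha.pow 2).add (hb.pow 2)).div hS hs.ne').add
    ((hS.const_mul (w ^ 2)).mul ((hc.pow 2).add (hd.pow 2)))).sub
    (hg.mul ((ha.mul hd).sub (hb.mul hc)))
  refine h.congr_deriv ?_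
  have hq : pfun k η t = √(pfun k η t) ^ 2 := (Real.sq_sqrt hp.le).symm
  simp only [Pi.add_apply, Pi.pow_apply, Pi.mul_apply, Pi.sub_apply]
  generalize √(pfun k η t) = s at *
  rw [hq]
  field_simp
  ring

lemma aux_E_growth {w k : ℝ} (hw : 1 / 2 < w) (hk : k ≠ 0) (η : ℝ) (a b c d : ℝ → ℝ)
    (ha : ∀ t, 0 ≤ t → HasDerivAt a (w ^ 2 * k * d t) t)
    (hb : ∀ t, 0 ≤ t → HasDerivAt b (-(w ^ 2 * k * c t)) t)
    (hc : ∀ t, 0 ≤ t → HasDerivAt c (k / pfun k η t * b t) t)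
    (hd : ∀ t, 0 ≤ t → HasDerivAt d (-(k / pfun k η t * a t)) t) (t : ℝ) (ht : 0 ≤ t) :
    auxE w k η a b c d t ≤ Real.exp (2 * (1 / (2 * w - 1))) * auxE w k η a b c d 0 ∧
    auxE w k η a b c d 0 ≤ Real.exp (2 * (1 / (2 * w - 1))) * auxE w k η a b c d t := by
  have hw0 : 0 < w := by linarith
  have hw1 : 0 < 2 * w - 1 := by linarith
  set γ : ℝ := 1 / (2 * w - 1) with hγ
  have hγ0 : 0 < γ := by positivity
  obtain ⟨σ, hσ, hσk⟩ : ∃ σ : ℝ, |σ| = 1 ∧ σ * k = |k| := by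
    rcases abs_cases k with h | h
    · exact ⟨1, by simp, by rw [h.1]; ring⟩
    · exact ⟨-1, by simp, by rw [h.1]; ring⟩
  set E := auxE w k η a b c d with hE
  set g : ℝ → ℝ := fun t => σ * (-(η - k * t) / √(pfun k η t)) with hgdef
  have hgabs : ∀ t, |g t| ≤ 1 := fun t => by
    simp only [hgdef]; rw [abs_mul, hσ, one_mul]; exact aux_g_abs hk η t
  have hgd : ∀ t, HasDerivAt g (|k| ^ 3 / √(pfun k η t) ^ 3) t := fun t => by
    refine ((aux_g hk η t).const_mul σ).congr_deriv ?_
    have : |k| ^ 3 = σ * k ^ 3 := by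
      rw [pow_succ, sq_abs, ← hσk]; ring
    rw [this]; ring
  have hEd := fun t ht => aux_E_deriv hk η a b c d t (ha t ht) (hb t ht) (hc t ht) (hd t ht)
  have hE0 : ∀ t, 0 ≤ E t := fun t => by
    refine le_trans ?_ (aux_E_bounds hw0 hk η a b c d t).1
    apply mul_nonneg
    · rw [sub_nonneg, div_le_one (by positivity)]; linarith
    · unfold auxT; positivity
  have hEbound : ∀ t, |-(k ^ 3 / √(pfun k η t) ^ 3 * (a t * d t - b t * c t))|
      ≤ γ * (|k| ^ 3 / √(pfun k η t) ^ 3) * E t := fun t => by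
    have hs : 0 < √(pfun k η t) := Real.sqrt_pos.2 (aux_pos hk η t)
    have h1 : |a t * d t - b t * c t| ≤ 1 / (2 * w) * auxT w k η a b c d t :=
      aux_quad (a := a t) (b := b t) (c := c t) (d := d t) hw0 hs
    have h2 := (aux_E_bounds hw0 hk η a b c d t).1
    have h3 : 1 / (2 * w) * auxT w k η a b c d t ≤ γ * E t := by
      have := mul_le_mul_of_nonneg_left h2 hγ0.le
      refine le_trans (le_of_eq ?_) this
      rw [hγ]; field_simp
    rw [abs_neg, abs_mul, abs_div, abs_pow, abs_pow, abs_of_pos hs]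
    calc _ ≤ |k| ^ 3 / √(pfun k η t) ^ 3 * (γ * E t) :=
          mul_le_mul_of_nonneg_left (h1.trans h3) (by positivity)
      _ = _ := by ring
  have hF : ∀ ε : ℝ, ∀ t, 0 ≤ t → HasDerivAt (fun t => E t * Real.exp (ε * g t))
      ((-(k ^ 3 / √(pfun k η t) ^ 3 * (a t * d t - b t * c t))
        + ε * (|k| ^ 3 / √(pfun k η t) ^ 3) * E t) * Real.exp (ε * g t)) t := fun ε t ht => by
    refine ((hEd t ht).mul ((hgd t).const_mul ε).exp).congr_deriv ?_
    rw [← hE]; ring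
  have hmono : MonotoneOn (fun t => E t * Real.exp (γ * g t)) (Set.Ici 0) := by
    refine monotoneOn_of_deriv_nonneg (convex_Ici 0)
      (fun t ht => (hF γ t ht).continuousAt.continuousWithinAt)
      (fun t ht => (hF γ t (interior_subset ht)).differentiableAt.differentiableWithinAt)
      (fun t ht => ?_)
    rw [(hF γ t (interior_subset ht)).deriv]
    have := (abs_le.1 (hEbound t)).1
    exact mul_nonneg (by linarith) (Real.exp_pos _).le
  have hanti : AntitoneOn (fun t => E t * Real.exp (-γ * g t)) (Set.Ici 0) := by
    refine antitoneOn_of_deriv_nonpos (convex_Ici 0)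
      (fun t ht => (hF (-γ) t ht).continuousAt.continuousWithinAt)
      (fun t ht => (hF (-γ) t (interior_subset ht)).differentiableAt.differentiableWithinAt)
      (fun t ht => ?_)
    rw [(hF (-γ) t (interior_subset ht)).deriv]
    have := (abs_le.1 (hEbound t)).2
    exact mul_nonpos_of_nonpos_of_nonneg (by linarith) (Real.exp_pos _).le
  have k1 := hmono (Set.mem_Ici.2 le_rfl) (Set.mem_Ici.2 ht) ht
  have k2 := hanti (Set.mem_Ici.2 le_rfl) (Set.mem_Ici.2 ht) ht
  simp only at k1 k2
  have g0 := abs_le.1 (hgabs 0)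
  have gt := abs_le.1 (hgabs t)
  have key : ∀ x y u v : ℝ, 0 ≤ y → x * Real.exp u ≤ y * Real.exp v → v - u ≤ 2 * γ →
      x ≤ Real.exp (2 * γ) * y := fun x y u v hy h huv => by
    have h1 : x ≤ y * Real.exp (v - u) := by
      rw [Real.exp_sub, ← mul_div_assoc, le_div_iff₀ (Real.exp_pos _)]; exact h
    refine h1.trans ?_
    rw [mul_comm]
    exact mul_le_mul_of_nonneg_right (Real.exp_le_exp.2 huv) hy
  exact ⟨key _ _ _ _ (hE0 0) k2 (by nlinarith), key _ _ _ _ (hE0 t) k1 (by nlinarith)⟩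

lemma aux_T_growth {w k : ℝ} (hw : 1 / 2 < w) (hk : k ≠ 0) (η : ℝ) (a b c d : ℝ → ℝ)
    (x y : ℝ) (hxy : auxE w k η a b c d x ≤
      Real.exp (2 * (1 / (2 * w - 1))) * auxE w k η a b c d y) :
    auxT w k η a b c d x ≤ (Real.exp (2 * (1 / (2 * w - 1))) * (1 + 1 / (2 * w))
      / (1 - 1 / (2 * w))) * auxT w k η a b c d y := by
  have hw0 : 0 < w := by linarith
  have hm : 0 < 1 - 1 / (2 * w) := by
    rw [sub_pos, div_lt_one (by positivity)]; linarith
  have h1 := (aux_E_bounds hw0 hk η a b c d x).1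
  have h2 := (aux_E_bounds hw0 hk η a b c d y).2
  have h3 := mul_le_mul_of_nonneg_left h2 (Real.exp_pos (2 * (1 / (2 * w - 1)))).le
  rw [div_mul_eq_mul_div, le_div_iff₀ hm]
  linarith

lemma aux_S {k : ℝ} (hk : k ≠ 0) (η t : ℝ) (z v : ℂ) :
    pfun k η t ^ (-(1 : ℝ) / 2) * ‖z‖ ^ 2 + pfun k η t ^ ((1 : ℝ) / 2) * ‖v‖ ^ 2
      = (z.re ^ 2 + z.im ^ 2) / √(pfun k η t) + √(pfun k η t) * (v.re ^ 2 + v.im ^ 2) := by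
  have hp := aux_pos hk η t
  rw [neg_div, Real.rpow_neg hp.le, ← Real.sqrt_eq_rpow, Complex.sq_norm, Complex.sq_norm,
    Complex.normSq_apply, Complex.normSq_apply]
  ring

lemma aux_final {w s s' u v u' v' K : ℝ} (hw : 0 < w) (hs : 0 < s) (hs' : 0 < s') (hu : 0 ≤ u)
    (hv : 0 ≤ v) (hu' : 0 ≤ u') (hv' : 0 ≤ v') (hK : 0 ≤ K)
    (h : u / s + w ^ 2 * s * v ≤ K * (u' / s' + w ^ 2 * s' * v')) :
    u / s + s * v ≤ ((1 + 1 / w ^ 2) * K * (1 + w ^ 2) + 1) * (u' / s' + s' * v') := by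
  have hA : 0 ≤ u / s := by positivity
  have hB : 0 ≤ s * v := by positivity
  have hA' : 0 ≤ u' / s' := by positivity
  have hB' : 0 ≤ s' * v' := by positivity
  rw [mul_assoc] at h
  rw [mul_assoc (w ^ 2)] at h
  generalize u / s = A at *
  generalize s * v = B at *
  generalize u' / s' = A' at *
  generalize s' * v' = B' at *
  have hW : 0 < w ^ 2 := by positivity
  generalize w ^ 2 = W at *
  have e1 : A + B ≤ (1 + 1 / W) * (A + W * B) := by
    have : (1 + 1 / W) * (A + W * B) = A + B + (W * B + A / W) := by field_simp; ring
    rw [this]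
    have : 0 ≤ W * B + A / W := by positivity
    linarith
  have e2 : A' + W * B' ≤ (1 + W) * (A' + B') := by nlinarith [mul_nonneg hW.le hA']
  have h1 : 0 ≤ 1 + 1 / W := by positivity
  calc A + B ≤ (1 + 1 / W) * (A + W * B) := e1
    _ ≤ (1 + 1 / W) * (K * (A' + W * B')) := mul_le_mul_of_nonneg_left h h1
    _ ≤ (1 + 1 / W) * (K * ((1 + W) * (A' + B'))) := by gcongr
    _ ≤ _ := by nlinarith

/-- pointwise inviscid conservation law: for `R > 1/4` there
exist `0 < C₁ ≤ C₂` depending only on `R` such that for all `k ≠ 0`, `η`, and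
every solution of the inviscid linearized Boussinesq–Couette system
`Ω′ = −R·i·k·Θ`, `Θ′ = −(i·k/p)·Ω`, one has for all `t ≥ 0`
`C₁·[(k²+η²)^{−1/2}|Ω(0)|² + (k²+η²)^{1/2}|Θ(0)|²]
  ≤ p(t)^{−1/2}|Ω(t)|² + p(t)^{1/2}|Θ(t)|²
  ≤ C₂·[(k²+η²)^{−1/2}|Ω(0)|² + (k²+η²)^{1/2}|Θ(0)|²]`. -/
theorem stmt8 (R : ℝ) (hR : 1 / 4 < R) :
    ∃ C₁ C₂ : ℝ, 0 < C₁ ∧ C₁ ≤ C₂ ∧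
      ∀ k η : ℝ, k ≠ 0 → ∀ Ω Θ : ℝ → ℂ,
        (∀ t : ℝ, 0 ≤ t →
          HasDerivAt Ω (-((R : ℂ) * Complex.I * (k : ℂ)) * Θ t) t ∧
          HasDerivAt Θ (-(Complex.I * (k : ℂ) / ((pfun k η t : ℝ) : ℂ)) * Ω t) t) →
        ∀ t : ℝ, 0 ≤ t →
          C₁ * ((k ^ 2 + η ^ 2) ^ (-(1 : ℝ) / 2) * ‖Ω 0‖ ^ 2
                + (k ^ 2 + η ^ 2) ^ ((1 : ℝ) / 2) * ‖Θ 0‖ ^ 2)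
            ≤ pfun k η t ^ (-(1 : ℝ) / 2) * ‖Ω t‖ ^ 2
                + pfun k η t ^ ((1 : ℝ) / 2) * ‖Θ t‖ ^ 2 ∧
          pfun k η t ^ (-(1 : ℝ) / 2) * ‖Ω t‖ ^ 2
              + pfun k η t ^ ((1 : ℝ) / 2) * ‖Θ t‖ ^ 2
            ≤ C₂ * ((k ^ 2 + η ^ 2) ^ (-(1 : ℝ) / 2) * ‖Ω 0‖ ^ 2
                + (k ^ 2 + η ^ 2) ^ ((1 : ℝ) / 2) * ‖Θ 0‖ ^ 2) := by
  obtain ⟨w, hw, rfl⟩ : ∃ w : ℝ, 1 / 2 < w ∧ R = w ^ 2 := by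
    refine ⟨√R, ?_, (Real.sq_sqrt (by linarith)).symm⟩
    exact Real.lt_sqrt_of_sq_lt (by norm_num at hR ⊢; exact hR)
  have hw0 : 0 < w := by linarith
  have hm : 0 < 1 - 1 / (2 * w) := by
    rw [sub_pos, div_lt_one (by positivity)]; linarith
  obtain ⟨K, hKdef⟩ : ∃ K : ℝ, K = Real.exp (2 * (1 / (2 * w - 1))) * (1 + 1 / (2 * w))
      / (1 - 1 / (2 * w)) := ⟨_, rfl⟩
  have hK : 0 ≤ K := by
    rw [hKdef]; exact div_nonneg (by positivity) hm.le
  obtain ⟨C, hC⟩ : ∃ C : ℝ, C = (1 + 1 / w ^ 2) * K * (1 + w ^ 2) + 1 := ⟨_, rfl⟩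
  have hC1 : 1 ≤ C := by
    rw [hC]
    have : 0 ≤ (1 + 1 / w ^ 2) * K * (1 + w ^ 2) := by positivity
    linarith
  have hC0 : 0 < C := by linarith
  refine ⟨C⁻¹, C, inv_pos.2 hC0, (inv_le_one_of_one_le₀ hC1).trans hC1, ?_⟩
  intro k η hk Ω Θ hsol t ht
  have hG := aux_E_growth hw hk η (fun t => (Ω t).re) (fun t => (Ω t).im)
    (fun t => (Θ t).re) (fun t => (Θ t).im)
    (fun t ht => by
      refine (Complex.reCLM.hasFDerivAt.comp_hasDerivAt t (hsol t ht).1).congr_deriv ?_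
      simp [← Complex.ofReal_pow])
    (fun t ht => by
      refine (Complex.imCLM.hasFDerivAt.comp_hasDerivAt t (hsol t ht).1).congr_deriv ?_
      simp [← Complex.ofReal_pow])
    (fun t ht => by
      refine (Complex.reCLM.hasFDerivAt.comp_hasDerivAt t (hsol t ht).2).congr_deriv ?_
      rw [mul_div_assoc, ← Complex.ofReal_div]
      simp [-Complex.ofReal_div])
    (fun t ht => by
      refine (Complex.imCLM.hasFDerivAt.comp_hasDerivAt t (hsol t ht).2).congr_deriv ?_
      rw [mul_div_assoc, ← Complex.ofReal_div]
      simp [-Complex.ofReal_div])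
    t ht
  have hs : ∀ t, 0 < √(pfun k η t) := fun t => Real.sqrt_pos.2 (aux_pos hk η t)
  have hT1 := aux_T_growth hw hk η _ _ _ _ _ _ hG.1
  have hT2 := aux_T_growth hw hk η _ _ _ _ _ _ hG.2
  rw [← hKdef] at hT1 hT2
  have f1 := aux_final hw0 (hs t) (hs 0) (by positivity) (by positivity) (by positivity)
    (by positivity) hK hT1
  have f2 := aux_final hw0 (hs 0) (hs t) (by positivity) (by positivity) (by positivity)
    (by positivity) hK hT2
  rw [← hC] at f1 f2
  have h0 : k ^ 2 + η ^ 2 = pfun k η 0 := by simp [pfun]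
  rw [h0, aux_S hk, aux_S hk]
  refine ⟨?_, f1⟩
  rw [inv_mul_le_iff₀ hC0]
  exact f2
end
end

section
/- Let c, C, μ, δ be positive real numbers. Suppose 𝔈 : [0,∞) → [0,∞) is differentiable, 𝔇 : [0,∞) → [0,∞) is continuous, and for every t ≥ 0 the differential inequality 𝔈′(t) ≤ −4c·𝔇(t) + μ^{−1/2−δ}·C^{1/2}·𝔈(t)^{1/2}·𝔇(t) holds. If 𝔈(0) ≤ c²·μ^{1+2δ}·C^{−1}, then for every t ≥ 0 one has 𝔈(t) + 2c·∫₀ᵗ 𝔇(s) ds ≤ 𝔈(0); in particular 𝔈(t) ≤ c²·μ^{1+2δ}·C^{−1} for all t ≥ 0. -/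
open Real MeasureTheory

/-- abstract bootstrap argument: if `𝔈` is differentiable and
nonnegative on `[0,∞)`, `𝔇` is continuous and nonnegative on `[0,∞)`,
`𝔈′(t) ≤ −4c·𝔇(t) + μ^{−1/2−δ}·C^{1/2}·𝔈(t)^{1/2}·𝔇(t)` for all `t ≥ 0`, and
`𝔈(0) ≤ c²·μ^{1+2δ}·C⁻¹`, then `𝔈(t) + 2c·∫₀ᵗ 𝔇 ≤ 𝔈(0)` and in particular
`𝔈(t) ≤ c²·μ^{1+2δ}·C⁻¹` for all `t ≥ 0`. -/
theorem stmt10 (c C μ δ : ℝ) (hc : 0 < c) (hC : 0 < C) (hμ : 0 < μ) (hδ : 0 < δ)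
    (E D E' : ℝ → ℝ)
    (hEnn : ∀ t : ℝ, 0 ≤ t → 0 ≤ E t)
    (hDnn : ∀ t : ℝ, 0 ≤ t → 0 ≤ D t)
    (hDcont : ContinuousOn D (Set.Ici (0 : ℝ)))
    (hEderiv : ∀ t : ℝ, 0 ≤ t → HasDerivAt E (E' t) t)
    (hineq : ∀ t : ℝ, 0 ≤ t →
      E' t ≤ -(4 * c) * D t
        + μ ^ (-(1 / 2 : ℝ) - δ) * Real.sqrt C * Real.sqrt (E t) * D t)
    (hinit : E 0 ≤ c ^ 2 * μ ^ ((1 : ℝ) + 2 * δ) * C⁻¹) :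
    ∀ t : ℝ, 0 ≤ t →
      E t + 2 * c * ∫ s in (0 : ℝ)..t, D s ≤ E 0 ∧
      E t ≤ c ^ 2 * μ ^ ((1 : ℝ) + 2 * δ) * C⁻¹ := by
  intro T hT
  set M : ℝ := c ^ 2 * μ ^ ((1 : ℝ) + 2 * δ) * C⁻¹ with hM
  set A : ℝ := μ ^ (-(1 / 2 : ℝ) - δ) * Real.sqrt C with hA
  have hMpos : 0 < M := by positivity
  have hApos : 0 < A := by positivity
  have hAM : A ^ 2 * M = c ^ 2 := by
    have h1 : (μ ^ (-(1 / 2 : ℝ) - δ)) ^ 2 * μ ^ ((1 : ℝ) + 2 * δ) = 1 := by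
      rw [← Real.rpow_natCast, ← Real.rpow_mul hμ.le, ← Real.rpow_add hμ]
      have : (-(1 / 2 : ℝ) - δ) * ((2 : ℕ) : ℝ) + (1 + 2 * δ) = 0 := by
        push_cast; ring
      rw [this, Real.rpow_zero]
    rw [hA, hM, mul_pow, Real.sq_sqrt hC.le]
    calc _ = ((μ ^ (-(1 / 2 : ℝ) - δ)) ^ 2 * μ ^ ((1 : ℝ) + 2 * δ)) * c ^ 2 * (C * C⁻¹) := by ring
      _ = c ^ 2 := by rw [h1, mul_inv_cancel₀ hC.ne']; ring
  have key : ∀ t : ℝ, 0 ≤ t → E t ≤ 4 * M → E' t ≤ -(2 * c) * D t := by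
    intro t ht hE
    have h2 : A * Real.sqrt (E t) ≤ 2 * c := by
      refine (sq_le_sq₀ (by positivity) (by positivity)).1 ?_
      rw [mul_pow, Real.sq_sqrt (hEnn t ht)]
      nlinarith [mul_le_mul_of_nonneg_left hE (sq_nonneg A)]
    have h3 := mul_le_mul_of_nonneg_right h2 (hDnn t ht)
    have h4 := hineq t ht
    linarith
  have hbd : ∀ t ∈ Set.Icc (0 : ℝ) T, E t ≤ 4 * M := by
    have hε : 0 < 3 * M / (T + 1) := by positivity
    have hB : ∀ t ∈ Set.Icc (0 : ℝ) T, M + 3 * M / (T + 1) * t ≤ 4 * M := by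
      intro t ht
      have : 3 * M / (T + 1) * t ≤ 3 * M / (T + 1) * (T + 1) :=
        mul_le_mul_of_nonneg_left (by linarith [ht.2]) hε.le
      rw [div_mul_cancel₀ _ (by positivity)] at this
      linarith
    intro t ht
    refine le_trans ?_ (hB t ht)
    refine image_le_of_deriv_right_lt_deriv_boundary (f := E) (f' := E') (a := 0) (b := T)
      (B := fun t => M + 3 * M / (T + 1) * t) (B' := fun _ => 3 * M / (T + 1))
      (fun x hx => (hEderiv x hx.1).continuousAt.continuousWithinAt)
      (fun x hx => (hEderiv x hx.1).hasDerivWithinAt) (by simpa using hinit) ?_ ?_ ht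
    · intro x
      simpa using ((hasDerivAt_id x).const_mul (3 * M / (T + 1))).const_add M
    · intro x hx hEx
      have h1 := key x hx.1 (by rw [hEx]; exact hB x ⟨hx.1, hx.2.le⟩)
      have h2 := mul_nonneg hc.le (hDnn x hx.1)
      linarith
  have hG : Continuous (fun s : ℝ => D (max s 0)) :=
    hDcont.comp_continuous (by fun_prop) (fun s => le_max_right s 0)
  have hint : ∫ s in (0 : ℝ)..T, D s = ∫ s in (0 : ℝ)..T, D (max s 0) := by
    apply intervalIntegral.integral_congr
    intro s hs
    rw [Set.uIcc_of_le hT] at hs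
    simp [max_eq_left hs.1]
  have hF : ∀ t : ℝ, 0 ≤ t → HasDerivAt (fun t => E t + 2 * c * ∫ s in (0 : ℝ)..t, D (max s 0))
      (E' t + 2 * c * D (max t 0)) t := fun t ht =>
    (hEderiv t ht).add ((hG.integral_hasStrictDerivAt 0 t).hasDerivAt.const_mul (2 * c))
  have hanti : AntitoneOn (fun t => E t + 2 * c * ∫ s in (0 : ℝ)..t, D (max s 0))
      (Set.Icc 0 T) := by
    apply antitoneOn_of_deriv_nonpos (convex_Icc 0 T)
    · exact fun x hx => (hF x hx.1).continuousAt.continuousWithinAt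
    · intro x hx
      rw [interior_Icc] at hx
      exact (hF x hx.1.le).differentiableAt.differentiableWithinAt
    · intro x hx
      rw [interior_Icc] at hx
      rw [(hF x hx.1.le).deriv, max_eq_left hx.1.le]
      have := key x hx.1.le (hbd x ⟨hx.1.le, hx.2.le⟩)
      linarith
  have hfin : E T + 2 * c * ∫ s in (0 : ℝ)..T, D s ≤ E 0 := by
    rw [hint]
    simpa using hanti (Set.left_mem_Icc.2 hT) (Set.right_mem_Icc.2 hT) hT
  have hnn : 0 ≤ ∫ s in (0 : ℝ)..T, D s :=
    intervalIntegral.integral_nonneg hT (fun s hs => hDnn s hs.1)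
  refine ⟨hfin, ?_⟩
  have := mul_nonneg hc.le hnn
  linarith
end

section
/- There exists a constant C depending only on m and δ such that for every measurable Z : ℝ² → ℂ the following two estimates hold (with both sides possibly infinite): (i) ‖⟨k⟩^{−1/2}·p^{−1/4}·Z‖_{L¹(ℝ²)} ≤ C·‖⟨k⟩^m·min(|k|^{1/4},1)·p^{−1/4}·Z‖_{L²_k L¹_η} ≤ C·( E + μ^{−δ}·D_γ^{δ}·E^{1−2δ} ); (ii) ‖⟨k⟩^m·A(k)·|η − kt|^{1/2}·Z‖_{L²_k L¹_η} ≤ C·( E + μ^{−δ}·D_α^{δ}·E^{1−2δ} ). -/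
open MeasureTheory Real
open scoped ENNReal NNReal

noncomputable section

/-- The Japanese bracket `⟨k⟩ = (1+k²)^{1/2}`. -/
def jap (k : ℝ) : ℝ := Real.sqrt (1 + k ^ 2)

/-- The moving-frame symbol `p(k,η) = k² + (η − kt)²`. -/
def pw (t k η : ℝ) : ℝ := k ^ 2 + (η - k * t) ^ 2

/-- The weight `A(k)`. -/
def Aw (μ k : ℝ) : ℝ :=
  if |k| < μ then 1 else μ ^ ((1 : ℝ) / 3) * |k| ^ (-(1 : ℝ) / 3)

/-- The weight `B(k)`. -/
def Bw (μ k : ℝ) : ℝ :=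
  if |k| < μ then μ ^ (-(1 : ℝ) / 2) else μ ^ ((1 : ℝ) / 6) * |k| ^ (-(2 : ℝ) / 3)

/-- Weighted `L¹(ℝ²)` norm `‖w·Z‖_{L¹}` (iterated, value in `[0,∞]`). -/
def L1n (w : ℝ → ℝ → ℝ) (Z : ℝ × ℝ → ℂ) : ℝ≥0∞ :=
  ∫⁻ k : ℝ, ∫⁻ η : ℝ, ENNReal.ofReal (w k η) * (‖Z (k, η)‖₊ : ℝ≥0∞)

/-- Weighted `L²(ℝ²)` norm `‖w·Z‖_{L²}` (value in `[0,∞]`). -/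
def L2n (w : ℝ → ℝ → ℝ) (Z : ℝ × ℝ → ℂ) : ℝ≥0∞ :=
  (∫⁻ k : ℝ, ∫⁻ η : ℝ,
      (ENNReal.ofReal (w k η) * (‖Z (k, η)‖₊ : ℝ≥0∞)) ^ 2) ^ ((1 : ℝ) / 2)

/-- Weighted mixed norm `‖w·Z‖_{L²_k L¹_η}` (value in `[0,∞]`). -/
def L2L1n (w : ℝ → ℝ → ℝ) (Z : ℝ × ℝ → ℂ) : ℝ≥0∞ :=
  (∫⁻ k : ℝ,
      (∫⁻ η : ℝ, ENNReal.ofReal (w k η) * (‖Z (k, η)‖₊ : ℝ≥0∞)) ^ 2) ^ ((1 : ℝ) / 2)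

/-- The energy `E = ‖⟨k⟩^m Z‖_{L²} + ‖⟨k⟩^m A(k)(η−kt) Z‖_{L²}`. -/
def En (t μ m : ℝ) (Z : ℝ × ℝ → ℂ) : ℝ≥0∞ :=
  L2n (fun k _ => jap k ^ m) Z + L2n (fun k η => jap k ^ m * Aw μ k * |η - k * t|) Z

/-- The dissipation `D_γ = μ·∬ ⟨k⟩^{2m} p |Z|²`. -/
def Dg (t μ m : ℝ) (Z : ℝ × ℝ → ℂ) : ℝ≥0∞ :=
  ENNReal.ofReal μ * ∫⁻ k : ℝ, ∫⁻ η : ℝ,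
    ENNReal.ofReal (jap k ^ (2 * m) * pw t k η) * (‖Z (k, η)‖₊ : ℝ≥0∞) ^ 2

/-- The dissipation `D_τ = ∬ ⟨k⟩^{2m} k² p⁻¹ |Z|²`. -/
def Dtau (t m : ℝ) (Z : ℝ × ℝ → ℂ) : ℝ≥0∞ :=
  ∫⁻ k : ℝ, ∫⁻ η : ℝ,
    ENNReal.ofReal (jap k ^ (2 * m) * k ^ 2 / pw t k η) * (‖Z (k, η)‖₊ : ℝ≥0∞) ^ 2

/-- The dissipation `D_α = μ·∬ ⟨k⟩^{2m} A(k)² (η−kt)² p |Z|²`. -/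
def Dal (t μ m : ℝ) (Z : ℝ × ℝ → ℂ) : ℝ≥0∞ :=
  ENNReal.ofReal μ * ∫⁻ k : ℝ, ∫⁻ η : ℝ,
    ENNReal.ofReal (jap k ^ (2 * m) * Aw μ k ^ 2 * (η - k * t) ^ 2 * pw t k η)
      * (‖Z (k, η)‖₊ : ℝ≥0∞) ^ 2

/-- The dissipation `D_{τα} = ∬ ⟨k⟩^{2m} A(k)² k² (η−kt)² p⁻¹ |Z|²`. -/
def Dta (t μ m : ℝ) (Z : ℝ × ℝ → ℂ) : ℝ≥0∞ :=
  ∫⁻ k : ℝ, ∫⁻ η : ℝ,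
    ENNReal.ofReal (jap k ^ (2 * m) * Aw μ k ^ 2 * k ^ 2 * (η - k * t) ^ 2 / pw t k η)
      * (‖Z (k, η)‖₊ : ℝ≥0∞) ^ 2

/-- The dissipation `D_β = ∬ ⟨k⟩^{2m} B(k)² k² |Z|²`. -/
def Db (t μ m : ℝ) (Z : ℝ × ℝ → ℂ) : ℝ≥0∞ :=
  ∫⁻ k : ℝ, ∫⁻ η : ℝ,
    ENNReal.ofReal (jap k ^ (2 * m) * Bw μ k ^ 2 * k ^ 2) * (‖Z (k, η)‖₊ : ℝ≥0∞) ^ 2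

/-- Comparison profile: `|y|^{-a}` near the origin and `|y|^{-b}` at infinity. -/
def Hprof (a b y : ℝ) : ℝ := if |y| < 1 then |y| ^ (-a) else |y| ^ (-b)

lemma Hprof_nonneg (a b y : ℝ) : 0 ≤ Hprof a b y := by
  unfold Hprof; split_ifs <;> positivity

lemma Hprof_measurable (a b : ℝ) : Measurable (Hprof a b) := by
  unfold Hprof
  refine Measurable.ite (measurableSet_lt (by fun_prop) (by fun_prop)) (by fun_prop) (by fun_prop)

lemma Hprof_lintegral (a b : ℝ) (ha : a < 1) (hb : 1 < b) :
    ∫⁻ y, ENNReal.ofReal (Hprof a b y) < ⊤ := by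
  have h1 : IntegrableOn (Hprof a b) (Set.Ioo 0 1) := by
    refine ((intervalIntegral.integrableOn_Ioo_rpow_iff (s := -a) zero_lt_one).2
      (by linarith)).congr_fun ?_ measurableSet_Ioo
    intro y hy
    simp only [Hprof, abs_of_pos hy.1, if_pos hy.2]
  have h2 : IntegrableOn (Hprof a b) (Set.Ici 1) := by
    rw [integrableOn_Ici_iff_integrableOn_Ioi]
    refine (integrableOn_Ioi_rpow_of_lt (a := -b) (by linarith) zero_lt_one).congr_fun ?_
      measurableSet_Ioi
    intro y hy
    have hy' : (1 : ℝ) < y := hy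
    simp only [Hprof, abs_of_pos (zero_lt_one.trans hy'), if_neg hy'.le.not_gt]
  have h3 : IntegrableOn (Hprof a b) (Set.Ioi 0) := by
    rw [← Set.Ioo_union_Ici_eq_Ioi (zero_lt_one (α := ℝ))]
    exact h1.union h2
  have h4 : IntegrableOn (Hprof a b) (Set.Iic 0) := by
    rw [integrableOn_Iic_iff_integrableOn_Iio]
    have := ((Measure.measurePreserving_neg (volume : Measure ℝ)).integrableOn_comp_preimage
      (Homeomorph.neg ℝ).measurableEmbedding (f := Hprof a b) (s := Set.Ioi 0)).2 h3
    have e : (Neg.neg ⁻¹' Set.Ioi (0:ℝ)) = Set.Iio 0 := by ext; simp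
    have e' : (Hprof a b ∘ Neg.neg) = Hprof a b := by ext y; simp [Hprof]
    rwa [e, e'] at this
  have h5 : Integrable (Hprof a b) := by
    rw [← integrableOn_univ, ← Set.Iic_union_Ioi (a := (0:ℝ))]
    exact h4.union h3
  rw [← ofReal_integral_eq_lintegral_ofReal h5 (ae_of_all _ (Hprof_nonneg a b))]
  exact ENNReal.ofReal_lt_top

/-- Cauchy-Schwarz. -/
lemma cs_sq (f g : ℝ → ℝ≥0∞) (hf : Measurable f) (hg : Measurable g) :
    (∫⁻ x, f x * g x) ≤ (∫⁻ x, f x ^ 2) ^ ((1:ℝ)/2) * (∫⁻ x, g x ^ 2) ^ ((1:ℝ)/2) := by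
  have := ENNReal.lintegral_mul_norm_pow_le (μ := (volume : Measure ℝ)) (hf.pow_const 2).aemeasurable
    (hg.pow_const 2).aemeasurable (p := 1/2) (q := 1/2) (by norm_num) (by norm_num) (by norm_num)
  refine le_trans (le_of_eq ?_) this
  have key : ∀ z : ℝ≥0∞, (z ^ 2) ^ ((1:ℝ)/2) = z := by
    intro z
    rw [← ENNReal.rpow_natCast, ← ENNReal.rpow_mul]; norm_num
  simp only [key]

lemma half_sq (z : ℝ≥0∞) : (z ^ ((1:ℝ)/2)) ^ 2 = z := by
  rw [← ENNReal.rpow_natCast, ← ENNReal.rpow_mul]; norm_num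

lemma sq_half (z : ℝ≥0∞) : (z ^ 2) ^ ((1:ℝ)/2) = z := by
  rw [← ENNReal.rpow_natCast, ← ENNReal.rpow_mul]; norm_num

lemma meas_term {v : ℝ → ℝ → ℝ} (hv : Measurable (Function.uncurry v)) {Z : ℝ × ℝ → ℂ}
    (hZ : Measurable Z) :
    Measurable (fun q : ℝ × ℝ => ENNReal.ofReal (v q.1 q.2) * (‖Z (q.1, q.2)‖₊ : ℝ≥0∞)) := by
  have : Measurable (fun q : ℝ × ℝ => v q.1 q.2) := hv
  fun_prop

lemma keyK (a b t : ℝ) (w u v : ℝ → ℝ → ℝ) (Z : ℝ × ℝ → ℂ) (hZ : Measurable Z)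
    (hu : Measurable (Function.uncurry u)) (hv : Measurable (Function.uncurry v))
    (hu0 : ∀ k η, 0 ≤ u k η)
    (hw : ∀ k η, w k η ≤ u k η * v k η)
    (hH : ∀ k η, η - k * t ≠ 0 → u k η ^ 2 ≤ Hprof a b (η - k * t)) :
    L2L1n w Z ≤ (∫⁻ y, ENNReal.ofReal (Hprof a b y)) ^ ((1:ℝ)/2) * L2n v Z := by
  have hmul : ∀ (X Y : ℝ≥0∞), X ^ ((1:ℝ)/2) * Y ^ ((1:ℝ)/2) = (X * Y) ^ ((1:ℝ)/2) :=
    fun X Y => (ENNReal.mul_rpow_of_nonneg _ _ (by norm_num)).symm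
  unfold L2L1n L2n
  rw [hmul]
  refine ENNReal.rpow_le_rpow ?_ (by norm_num)
  have hm1 := meas_term hv hZ
  rw [← lintegral_const_mul _ (Measurable.lintegral_prod_right' (hm1.pow_const 2))]
  refine lintegral_mono fun k => ?_
  have hut : Measurable (fun q : ℝ × ℝ => u q.1 q.2) := hu
  have h1 : (∫⁻ η : ℝ, ENNReal.ofReal (w k η) * (‖Z (k, η)‖₊ : ℝ≥0∞)) ≤
      ∫⁻ η : ℝ, ENNReal.ofReal (u k η) * (ENNReal.ofReal (v k η) * (‖Z (k, η)‖₊ : ℝ≥0∞)) := by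
    refine lintegral_mono fun η => ?_
    rw [← mul_assoc, ← ENNReal.ofReal_mul (hu0 k η)]
    gcongr
    exact hw k η
  have h2 := h1.trans (cs_sq _ _ (by exact (hut.comp (measurable_prodMk_left (x := k))).ennreal_ofReal)
    (hm1.comp (measurable_prodMk_left (x := k))))
  have h3 : (∫⁻ η : ℝ, ENNReal.ofReal (u k η) ^ 2) ≤ ∫⁻ y, ENNReal.ofReal (Hprof a b y) := by
    rw [← lintegral_sub_right_eq_self (fun y => ENNReal.ofReal (Hprof a b y)) (k * t)]
    refine lintegral_mono_ae ?_
    have : ∀ᵐ η : ℝ, η ≠ k * t := by simp [ae_iff]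
    filter_upwards [this] with η hη
    rw [← ENNReal.ofReal_pow (hu0 k η)]
    exact ENNReal.ofReal_le_ofReal (hH k η (sub_ne_zero.2 hη))
  calc _ ≤ _ := pow_le_pow_left' h2 2
    _ = _ := by rw [mul_pow, half_sq, half_sq]
    _ ≤ _ := by gcongr

lemma interpH (t δ : ℝ) (hδ : 0 < δ) (hδ' : δ < 1/2) (u : ℝ → ℝ → ℝ) (Z : ℝ × ℝ → ℂ)
    (hZ : Measurable Z) (hu : Measurable (Function.uncurry u)) (hu0 : ∀ k η, 0 ≤ u k η) :
    L2n (fun k η => u k η * pw t k η ^ δ) Z ≤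
      (∫⁻ k : ℝ, ∫⁻ η : ℝ, ENNReal.ofReal (u k η ^ 2 * pw t k η) * (‖Z (k, η)‖₊ : ℝ≥0∞) ^ 2) ^ δ
        * L2n u Z ^ (1 - 2 * δ) := by
  have hut : Measurable (fun q : ℝ × ℝ => u q.1 q.2) := hu
  have hp0 : ∀ k η, 0 ≤ pw t k η := fun k η => by unfold pw; positivity
  have hpm : Measurable (fun q : ℝ × ℝ => pw t q.1 q.2) := by unfold pw; fun_prop
  have hm1 := meas_term hu hZ
  have hm2 : Measurable (fun q : ℝ × ℝ => ENNReal.ofReal (u q.1 q.2 ^ 2 * pw t q.1 q.2)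
    * (‖Z (q.1, q.2)‖₊ : ℝ≥0∞) ^ 2) := by fun_prop
  have hm3 := hm1.pow_const 2
  have hpt : ∀ k η, (ENNReal.ofReal (u k η * pw t k η ^ δ) * (‖Z (k, η)‖₊ : ℝ≥0∞)) ^ 2 =
      (ENNReal.ofReal (u k η ^ 2 * pw t k η) * (‖Z (k, η)‖₊ : ℝ≥0∞) ^ 2) ^ (2 * δ) *
      ((ENNReal.ofReal (u k η) * (‖Z (k, η)‖₊ : ℝ≥0∞)) ^ 2) ^ (1 - 2 * δ) := by
    intro k η
    have e : ENNReal.ofReal (u k η ^ 2 * pw t k η) * (‖Z (k, η)‖₊ : ℝ≥0∞) ^ 2 =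
      (ENNReal.ofReal (u k η) * (‖Z (k, η)‖₊ : ℝ≥0∞)) ^ 2 * ENNReal.ofReal (pw t k η) := by
      rw [ENNReal.ofReal_mul (by positivity), ENNReal.ofReal_pow (hu0 k η)]; ring
    rw [e, ENNReal.mul_rpow_of_nonneg _ _ (by linarith), mul_right_comm,
      ← ENNReal.rpow_add_of_nonneg _ _ (by linarith) (by linarith), ENNReal.ofReal_mul (hu0 k η),
      ← ENNReal.ofReal_rpow_of_nonneg (hp0 k η) hδ.le]
    rw [show 2 * δ + (1 - 2 * δ) = 1 by ring, ENNReal.rpow_one, mul_comm 2 δ, ENNReal.rpow_mul,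
      ENNReal.rpow_two]
    ring
  have hmain : (∫⁻ k : ℝ, ∫⁻ η : ℝ,
      (ENNReal.ofReal (u k η * pw t k η ^ δ) * (‖Z (k, η)‖₊ : ℝ≥0∞)) ^ 2) ≤
      (∫⁻ k : ℝ, ∫⁻ η : ℝ, ENNReal.ofReal (u k η ^ 2 * pw t k η) * (‖Z (k, η)‖₊ : ℝ≥0∞) ^ 2) ^ (2 * δ)
      * (∫⁻ k : ℝ, ∫⁻ η : ℝ, (ENNReal.ofReal (u k η) * (‖Z (k, η)‖₊ : ℝ≥0∞)) ^ 2) ^ (1 - 2 * δ) := by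
    refine le_trans ?_ (ENNReal.lintegral_mul_norm_pow_le
      (Measurable.lintegral_prod_right' hm2).aemeasurable
      (Measurable.lintegral_prod_right' hm3).aemeasurable
      (by linarith) (by linarith) (by ring))
    refine lintegral_mono fun k => ?_
    simp only [hpt]
    exact ENNReal.lintegral_mul_norm_pow_le
      (hm2.comp (measurable_prodMk_left (x := k))).aemeasurable
      (hm3.comp (measurable_prodMk_left (x := k))).aemeasurable
      (by linarith) (by linarith) (by ring)
  unfold L2n
  refine (ENNReal.rpow_le_rpow hmain (by norm_num : (0:ℝ) ≤ 1/2)).trans (le_of_eq ?_)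
  rw [ENNReal.mul_rpow_of_nonneg _ _ (by norm_num), ← ENNReal.rpow_mul, ← ENNReal.rpow_mul,
    ← ENNReal.rpow_mul]
  congr 2 <;> ring

lemma L2n_max (v1 v2 : ℝ → ℝ → ℝ) (Z : ℝ × ℝ → ℂ) (hZ : Measurable Z)
    (h1 : Measurable (Function.uncurry v1)) (_h2 : Measurable (Function.uncurry v2)) :
    L2n (fun k η => max (v1 k η) (v2 k η)) Z ≤ L2n v1 Z + L2n v2 Z := by
  unfold L2n
  refine le_trans ?_ (ENNReal.rpow_add_le_add_rpow _ _ (by norm_num) (by norm_num))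
  refine ENNReal.rpow_le_rpow ?_ (by norm_num)
  have hm1 := (meas_term h1 hZ).pow_const 2
  rw [← lintegral_add_left (Measurable.lintegral_prod_right' hm1)]
  refine lintegral_mono fun k => ?_
  refine le_trans ?_ (le_of_eq (lintegral_add_left (hm1.comp (measurable_prodMk_left (x := k))) _))
  refine lintegral_mono fun η => ?_
  simp only [Function.comp]
  rcases max_cases (v1 k η) (v2 k η) with h | h
  · simp only [h.1]; exact le_self_add
  · simp only [h.1]; exact le_add_self

lemma jap_pos (k : ℝ) : 0 < jap k := by unfold jap; positivity
lemma one_le_jap (k : ℝ) : 1 ≤ jap k := by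
  unfold jap; rw [Real.one_le_sqrt]; nlinarith [sq_nonneg k]
lemma abs_le_jap (k : ℝ) : |k| ≤ jap k := by
  unfold jap; apply Real.abs_le_sqrt; linarith
lemma jap_meas : Measurable jap := by unfold jap; fun_prop
lemma pw_nonneg (t k η : ℝ) : 0 ≤ pw t k η := by unfold pw; positivity
lemma pw_meas (t : ℝ) : Measurable (fun q : ℝ × ℝ => pw t q.1 q.2) := by unfold pw; fun_prop
lemma Aw_meas (μ : ℝ) : Measurable (Aw μ) := by
  unfold Aw
  exact Measurable.ite (measurableSet_lt (by fun_prop) (by fun_prop)) (by fun_prop) (by fun_prop)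
lemma Aw_nonneg (μ k : ℝ) (h : 0 < μ) : 0 ≤ Aw μ k := by
  unfold Aw; split_ifs <;> positivity
lemma Aw_le_one (μ k : ℝ) (h : 0 < μ) : Aw μ k ≤ 1 := by
  unfold Aw; split_ifs with hk
  · exact le_rfl
  · push Not at hk
    have hk0 : 0 < |k| := h.trans_le hk
    calc μ ^ ((1 : ℝ) / 3) * |k| ^ (-(1 : ℝ) / 3)
        ≤ |k| ^ ((1 : ℝ) / 3) * |k| ^ (-(1 : ℝ) / 3) := by gcongr
      _ = 1 := by rw [← Real.rpow_add hk0]; norm_num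

lemma Dmu (μ δ : ℝ) (hμ : 0 < μ) (hδ : 0 < δ) (X : ℝ≥0∞) :
    ENNReal.ofReal (μ ^ (-δ)) * (ENNReal.ofReal μ * X) ^ δ = X ^ δ := by
  rw [ENNReal.mul_rpow_of_nonneg _ _ hδ.le, ← mul_assoc, ENNReal.ofReal_rpow_of_nonneg hμ.le hδ.le,
    ← ENNReal.ofReal_mul (by positivity), ← Real.rpow_add hμ]
  simp

/-- The pointwise bound for the first estimate. -/
lemma part1_pt (m k : ℝ) (hm : 0 < m) (hk : k ≠ 0) :
    (jap k ^ (-(1:ℝ)/2 - m) * (min (|k| ^ ((1 : ℝ) / 4)) 1)⁻¹) ^ 2 ≤ Hprof (1/2) (1 + 2*m) k := by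
  have hk0 : 0 < |k| := abs_pos.2 hk
  have hj := jap_pos k
  rw [mul_pow, ← Real.rpow_mul_natCast hj.le]
  unfold Hprof
  split_ifs with h
  · rw [min_eq_left (Real.rpow_le_one hk0.le h.le (by norm_num)), ← Real.rpow_neg hk0.le,
      ← Real.rpow_mul_natCast hk0.le]
    have : jap k ^ ((-(1:ℝ)/2 - m) * (2:ℕ)) ≤ 1 :=
      Real.rpow_le_one_of_one_le_of_nonpos (one_le_jap k) (by push_cast; linarith)
    calc _ ≤ 1 * |k| ^ (-((1:ℝ)/4) * (2:ℕ)) := by gcongr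
      _ = _ := by norm_num
  · push Not at h
    rw [min_eq_right (Real.one_le_rpow h (by norm_num))]
    calc _ = jap k ^ (-(1+2*m)) := by norm_num; congr 1; ring
      _ ≤ _ := Real.rpow_le_rpow_of_nonpos hk0 (abs_le_jap k) (by linarith)

/-- The pointwise bound for the second estimate. -/
lemma part2_pt (t k η δ : ℝ) (hδ : 0 < δ) (hη : η - k * t ≠ 0) :
    (min (|k| ^ ((1 : ℝ) / 4)) 1 * pw t k η ^ (-(1:ℝ)/4 - δ)) ^ 2 ≤
      Hprof (1/2 + 4*δ) (1 + 4*δ) (η - k * t) := by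
  have hy0 : 0 < |η - k*t| := abs_pos.2 hη
  have hyp : |η - k*t| ^ (2:ℝ) ≤ pw t k η := by
    rw [Real.rpow_two, sq_abs]; unfold pw; nlinarith [sq_nonneg k]
  have hkp : |k| ^ (2:ℝ) ≤ pw t k η := by
    rw [Real.rpow_two, sq_abs]; unfold pw; nlinarith [sq_nonneg (η - k*t)]
  have hp : 0 < pw t k η := lt_of_lt_of_le (by positivity) hyp
  have hmn : 0 ≤ min (|k| ^ ((1 : ℝ) / 4)) 1 := by positivity
  have hmain : ∀ s : ℝ, 0 ≤ s → pw t k η ^ (-s) ≤ |η - k*t| ^ (-(2*s)) := by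
    intro s hs
    calc _ ≤ (|η - k*t| ^ (2:ℝ)) ^ (-s) :=
          Real.rpow_le_rpow_of_nonpos (by positivity) hyp (by linarith)
      _ = _ := by rw [← Real.rpow_mul hy0.le]; congr 1; ring
  rw [mul_pow, ← Real.rpow_mul_natCast hp.le]
  unfold Hprof
  split_ifs with h
  · have h1 : (min (|k| ^ ((1 : ℝ) / 4)) 1) ^ 2 ≤ pw t k η ^ ((1:ℝ)/4) := by
      calc _ ≤ (|k| ^ ((1 : ℝ) / 4)) ^ 2 := by gcongr; exact min_le_left _ _
        _ = (|k| ^ (2:ℝ)) ^ ((1:ℝ)/4) := by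
          rw [← Real.rpow_mul_natCast (abs_nonneg k), ← Real.rpow_mul (abs_nonneg k)]; norm_num
        _ ≤ _ := by gcongr
    calc _ ≤ pw t k η ^ ((1:ℝ)/4) * pw t k η ^ ((-(1:ℝ)/4 - δ) * (2:ℕ)) := by gcongr
      _ = pw t k η ^ (-(1/4 + 2*δ)) := by rw [← Real.rpow_add hp]; congr 1; push_cast; ring
      _ ≤ _ := hmain _ (by linarith)
      _ = _ := by congr 1; ring
  · calc _ ≤ 1 ^ 2 * pw t k η ^ ((-(1:ℝ)/4 - δ) * (2:ℕ)) := by gcongr; exact min_le_right _ _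
      _ = pw t k η ^ (-(1/2 + 2*δ)) := by rw [one_pow, one_mul]; congr 1; push_cast; ring
      _ ≤ _ := hmain _ (by linarith)
      _ = _ := by congr 1; ring

lemma part1 (m t : ℝ) (hm : 0 < m) (Z : ℝ × ℝ → ℂ) (hZ : Measurable Z) :
    L1n (fun k η => jap k ^ (-(1 : ℝ) / 2) * pw t k η ^ (-(1 : ℝ) / 4)) Z
      ≤ (∫⁻ y, ENNReal.ofReal (Hprof (1/2) (1+2*m) y)) ^ ((1:ℝ)/2) *
        L2L1n (fun k η =>
          jap k ^ m * min (|k| ^ ((1 : ℝ) / 4)) 1 * pw t k η ^ (-(1 : ℝ) / 4)) Z := by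
  have hjm := jap_meas
  have hpm := pw_meas t
  obtain ⟨a, ha⟩ : ∃ a : ℝ → ℝ, a = fun k =>
    jap k ^ (-(1:ℝ)/2 - m) * (min (|k| ^ ((1 : ℝ) / 4)) 1)⁻¹ := ⟨_, rfl⟩
  have ha0 : ∀ k, 0 ≤ a k := fun k => by have := jap_pos k; simp only [ha]; positivity
  have ham : Measurable a := by simp only [ha]; fun_prop
  obtain ⟨v, hv⟩ : ∃ v : ℝ → ℝ → ℝ, v = fun k η =>
    jap k ^ m * min (|k| ^ ((1 : ℝ) / 4)) 1 * pw t k η ^ (-(1 : ℝ) / 4) := ⟨_, rfl⟩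
  rw [← hv]
  have hvm : Measurable (Function.uncurry v) := by
    simp only [hv, Function.uncurry_def]; fun_prop
  have hmt := meas_term hvm hZ
  have hne : ∀ᵐ k : ℝ, k ≠ 0 := by simp [ae_iff]
  have h1 : L1n (fun k η => jap k ^ (-(1 : ℝ) / 2) * pw t k η ^ (-(1 : ℝ) / 4)) Z ≤
      ∫⁻ k, ENNReal.ofReal (a k) * ∫⁻ η, ENNReal.ofReal (v k η) * (‖Z (k, η)‖₊ : ℝ≥0∞) := by
    unfold L1n
    refine lintegral_mono_ae ?_
    filter_upwards [hne] with k hk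
    have hmk : Measurable (fun η => ENNReal.ofReal (v k η) * (‖Z (k, η)‖₊ : ℝ≥0∞)) :=
      hmt.comp (measurable_prodMk_left (x := k))
    rw [← lintegral_const_mul _ hmk]
    refine lintegral_mono fun η => ?_
    rw [← mul_assoc, ← ENNReal.ofReal_mul (ha0 k)]
    refine mul_le_mul' (ENNReal.ofReal_le_ofReal ?_) le_rfl
    have hk0 : 0 < |k| := abs_pos.2 hk
    have hmin : 0 < min (|k| ^ ((1 : ℝ) / 4)) 1 := by positivity
    refine le_of_eq ?_
    simp only [ha, hv]
    have e : jap k ^ (-(1:ℝ)/2) = jap k ^ (-(1:ℝ)/2 - m) * jap k ^ m := by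
      rw [← Real.rpow_add (jap_pos k), sub_add_cancel]
    have e2 := inv_mul_cancel₀ hmin.ne'
    rw [e]
    linear_combination (-(jap k ^ (-(1:ℝ)/2 - m) * jap k ^ m * pw t k η ^ (-(1 : ℝ) / 4))) * e2
  refine h1.trans ((cs_sq _ _ (by fun_prop) (Measurable.lintegral_prod_right' hmt)).trans ?_)
  unfold L2L1n
  refine mul_le_mul' (ENNReal.rpow_le_rpow ?_ (by norm_num)) le_rfl
  refine lintegral_mono_ae ?_
  filter_upwards [hne] with k hk
  rw [← ENNReal.ofReal_pow (ha0 k)]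
  refine ENNReal.ofReal_le_ofReal ?_
  rw [ha]
  exact part1_pt m k hm hk

lemma part2 (m δ t μ : ℝ) (hδ : 0 < δ) (hδ' : δ < 1/12) (hμ : 0 < μ)
    (Z : ℝ × ℝ → ℂ) (hZ : Measurable Z) :
    L2L1n (fun k η =>
        jap k ^ m * min (|k| ^ ((1 : ℝ) / 4)) 1 * pw t k η ^ (-(1 : ℝ) / 4)) Z
      ≤ (∫⁻ y, ENNReal.ofReal (Hprof (1/2 + 4*δ) (1+4*δ) y)) ^ ((1:ℝ)/2) *
        (ENNReal.ofReal (μ ^ (-δ)) * Dg t μ m Z ^ δ * En t μ m Z ^ (1 - 2 * δ)) := by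
  have hjm := jap_meas
  have hpm := pw_meas t
  have hu : Measurable (Function.uncurry fun (k _ : ℝ) => jap k ^ m) := by
    simp only [Function.uncurry_def]; fun_prop
  refine (keyK (1/2+4*δ) (1+4*δ) t _
    (fun k η => min (|k| ^ ((1 : ℝ) / 4)) 1 * pw t k η ^ (-(1:ℝ)/4 - δ))
    (fun k η => jap k ^ m * pw t k η ^ δ) Z hZ ?_ ?_ ?_ ?_ ?_).trans ?_
  · simp only [Function.uncurry_def]; fun_prop
  · simp only [Function.uncurry_def]; fun_prop
  · intro k η; have := pw_nonneg t k η; positivity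
  · intro k η
    refine le_of_eq ?_
    have : pw t k η ^ (-(1:ℝ)/4) = pw t k η ^ (-(1:ℝ)/4 - δ) * pw t k η ^ δ := by
      rcases (pw_nonneg t k η).eq_or_lt with h | h
      · rw [← h, Real.zero_rpow (by norm_num), Real.zero_rpow hδ.ne', mul_zero]
      · rw [← Real.rpow_add h]; congr 1; ring
    rw [this]; ring
  · intro k η h; exact part2_pt t k η δ hδ h
  · gcongr
    refine (interpH t δ hδ (by linarith) (fun k _ => jap k ^ m) Z hZ hu
      (fun k η => by have := jap_pos k; positivity)).trans ?_
    unfold Dg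
    rw [Dmu μ δ hμ hδ]
    have e : ∀ k, (jap k ^ m) ^ 2 = jap k ^ (2 * m) := fun k => by
      rw [← Real.rpow_mul_natCast (jap_pos k).le]; congr 1; push_cast; ring
    simp only [e]
    gcongr
    · linarith
    · unfold En; exact le_self_add

lemma part3 (m δ t μ : ℝ) (hδ : 0 < δ) (hδ' : δ < 1/12) (hμ : 0 < μ)
    (Z : ℝ × ℝ → ℂ) (hZ : Measurable Z) :
    L2L1n (fun k η => jap k ^ m * Aw μ k * |η - k * t| ^ ((1 : ℝ) / 2)) Z
      ≤ (∫⁻ y, ENNReal.ofReal (Hprof 0 (1+4*δ) y)) ^ ((1:ℝ)/2) *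
        (En t μ m Z + ENNReal.ofReal (μ ^ (-δ)) * Dal t μ m Z ^ δ * En t μ m Z ^ (1 - 2 * δ)) := by
  have hjm := jap_meas
  have hpm := pw_meas t
  have hAm := Aw_meas μ
  have hHm := Hprof_measurable 0 (1+4*δ)
  have hu1 : Measurable (Function.uncurry fun (k _ : ℝ) => jap k ^ m) := by
    simp only [Function.uncurry_def]; fun_prop
  have hu2 : Measurable (Function.uncurry fun (k η : ℝ) => jap k ^ m * Aw μ k * |η - k * t|) := by
    simp only [Function.uncurry_def]; fun_prop
  have hu3 : Measurable (Function.uncurry fun (k η : ℝ) =>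
      jap k ^ m * Aw μ k * |η - k * t| * pw t k η ^ δ) := by
    simp only [Function.uncurry_def]; fun_prop
  have hA0 := fun k => Aw_nonneg μ k hμ
  refine (keyK 0 (1+4*δ) t _
    (fun k η => √(Hprof 0 (1+4*δ) (η - k * t)))
    (fun k η => max (jap k ^ m) (jap k ^ m * Aw μ k * |η - k * t| * pw t k η ^ δ))
    Z hZ ?_ ?_ ?_ ?_ ?_).trans ?_
  · simp only [Function.uncurry_def]; fun_prop
  · simp only [Function.uncurry_def] at hu3 ⊢; fun_prop
  · intro k η; positivity
  · intro k η
    have hj : 0 ≤ jap k ^ m := by have := jap_pos k; positivity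
    by_cases h : |η - k * t| < 1
    · have e : √(Hprof 0 (1+4*δ) (η - k * t)) = 1 := by simp [Hprof, h]
      rw [e, one_mul]
      refine le_trans ?_ (le_max_left _ _)
      rw [mul_assoc]
      refine mul_le_of_le_one_right hj ?_
      exact mul_le_one₀ (Aw_le_one μ k hμ) (by positivity)
        (Real.rpow_le_one (abs_nonneg _) h.le (by norm_num))
    · have h' : 1 ≤ |η - k * t| := not_lt.1 h
      have hy : 0 < |η - k * t| := by linarith
      have e : √(Hprof 0 (1+4*δ) (η - k * t)) = |η - k*t| ^ (-(1/2 + 2*δ)) := by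
        rw [Hprof, if_neg h, Real.sqrt_eq_rpow, ← Real.rpow_mul hy.le]; congr 1; ring
      have hyp : |η - k*t| ^ (2:ℝ) ≤ pw t k η := by
        rw [Real.rpow_two, sq_abs]; unfold pw; nlinarith [sq_nonneg k]
      have hyd : |η - k*t| ^ (2*δ) ≤ pw t k η ^ δ := by
        rw [Real.rpow_mul hy.le]; gcongr
      have e2 : |η - k*t| ^ ((1:ℝ)/2) =
          |η - k*t| ^ (-(1/2 + 2*δ)) * (|η - k*t| * |η - k*t| ^ (2*δ)) := by
        nth_rw 3 [← Real.rpow_one |η - k*t|]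
        rw [← Real.rpow_add hy, ← Real.rpow_add hy]; congr 1; ring
      have hA := hA0 k
      rw [e, e2]
      calc _ = |η - k*t| ^ (-(1/2 + 2*δ)) *
            (jap k ^ m * Aw μ k * |η - k*t| * |η - k*t| ^ (2*δ)) := by ring
        _ ≤ |η - k*t| ^ (-(1/2 + 2*δ)) *
            (jap k ^ m * Aw μ k * |η - k*t| * pw t k η ^ δ) := by gcongr
        _ ≤ _ := by gcongr; exact le_max_right _ _
  · intro k η _
    rw [Real.sq_sqrt (Hprof_nonneg _ _ _)]
  · gcongr
    refine (L2n_max _ _ Z hZ hu1 hu3).trans ?_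
    gcongr
    · unfold En; exact le_self_add
    refine (interpH t δ hδ (by linarith) (fun k η => jap k ^ m * Aw μ k * |η - k * t|) Z hZ hu2
      (fun k η => by have := jap_pos k; have := hA0 k; positivity)).trans ?_
    unfold Dal
    rw [Dmu μ δ hμ hδ]
    have e : ∀ k η, (jap k ^ m * Aw μ k * |η - k * t|) ^ 2
        = jap k ^ (2 * m) * Aw μ k ^ 2 * (η - k * t) ^ 2 := fun k η => by
      rw [mul_pow, mul_pow, sq_abs, ← Real.rpow_mul_natCast (jap_pos k).le]
      congr 3; push_cast; ring
    simp only [e]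
    gcongr
    · linarith
    · unfold En; exact le_add_self

/-- interpolation lemma for the energy: there is `C = C(m,δ)`
such that for all `t`, `μ ∈ (0,1)` and measurable `Z`:
(i) `‖⟨k⟩^{−1/2} p^{−1/4} Z‖_{L¹} ≤ C‖⟨k⟩^m min(|k|^{1/4},1) p^{−1/4} Z‖_{L²_kL¹_η}
      ≤ C(E + μ^{−δ} D_γ^δ E^{1−2δ})`;
(ii) `‖⟨k⟩^m A(k)|η−kt|^{1/2} Z‖_{L²_kL¹_η} ≤ C(E + μ^{−δ} D_α^δ E^{1−2δ})`. -/
theorem stmt12 (m δ : ℝ) (hm : 0 < m) (hδ : δ ∈ Set.Ioo (0 : ℝ) (1 / 12)) :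
    ∃ C : ℝ, 0 < C ∧
      ∀ (t μ : ℝ), μ ∈ Set.Ioo (0 : ℝ) 1 →
        ∀ Z : ℝ × ℝ → ℂ, Measurable Z →
          (L1n (fun k η => jap k ^ (-(1 : ℝ) / 2) * pw t k η ^ (-(1 : ℝ) / 4)) Z
              ≤ ENNReal.ofReal C *
                  L2L1n (fun k η =>
                    jap k ^ m * min (|k| ^ ((1 : ℝ) / 4)) 1 * pw t k η ^ (-(1 : ℝ) / 4)) Z ∧
            L2L1n (fun k η =>
                jap k ^ m * min (|k| ^ ((1 : ℝ) / 4)) 1 * pw t k η ^ (-(1 : ℝ) / 4)) Z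
              ≤ ENNReal.ofReal C *
                  (En t μ m Z
                    + ENNReal.ofReal (μ ^ (-δ)) * Dg t μ m Z ^ δ
                        * En t μ m Z ^ (1 - 2 * δ))) ∧
          L2L1n (fun k η => jap k ^ m * Aw μ k * |η - k * t| ^ ((1 : ℝ) / 2)) Z
            ≤ ENNReal.ofReal C *
                (En t μ m Z
                  + ENNReal.ofReal (μ ^ (-δ)) * Dal t μ m Z ^ δ
                      * En t μ m Z ^ (1 - 2 * δ)) := by
  obtain ⟨h0, h1⟩ := hδ
  have f1 := Hprof_lintegral (1/2) (1+2*m) (by norm_num) (by linarith)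
  have f2 := Hprof_lintegral (1/2+4*δ) (1+4*δ) (by linarith) (by linarith)
  have f3 := Hprof_lintegral 0 (1+4*δ) (by norm_num) (by linarith)
  have hhalf : ∀ X : ℝ≥0∞, X < ⊤ → X ^ ((1:ℝ)/2) ≠ ⊤ := fun X hX =>
    ENNReal.rpow_ne_top_of_nonneg (by norm_num) hX.ne
  generalize hM1 : (∫⁻ y, ENNReal.ofReal (Hprof (1/2) (1+2*m) y)) ^ ((1:ℝ)/2) = M1
  generalize hM2 : (∫⁻ y, ENNReal.ofReal (Hprof (1/2+4*δ) (1+4*δ) y)) ^ ((1:ℝ)/2) = M2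
  generalize hM3 : (∫⁻ y, ENNReal.ofReal (Hprof 0 (1+4*δ) y)) ^ ((1:ℝ)/2) = M3
  have g1 : M1 ≠ ⊤ := hM1 ▸ hhalf _ f1
  have g2 : M2 ≠ ⊤ := hM2 ▸ hhalf _ f2
  have g3 : M3 ≠ ⊤ := hM3 ▸ hhalf _ f3
  refine ⟨M1.toReal + M2.toReal + M3.toReal + 1, by positivity, ?_⟩
  have p1 := ENNReal.toReal_nonneg (a := M1)
  have p2 := ENNReal.toReal_nonneg (a := M2)
  have p3 := ENNReal.toReal_nonneg (a := M3)
  have b1 : M1 ≤ ENNReal.ofReal (M1.toReal + M2.toReal + M3.toReal + 1) :=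
    (ENNReal.le_ofReal_iff_toReal_le g1 (by positivity)).2 (by linarith)
  have b2 : M2 ≤ ENNReal.ofReal (M1.toReal + M2.toReal + M3.toReal + 1) :=
    (ENNReal.le_ofReal_iff_toReal_le g2 (by positivity)).2 (by linarith)
  have b3 : M3 ≤ ENNReal.ofReal (M1.toReal + M2.toReal + M3.toReal + 1) :=
    (ENNReal.le_ofReal_iff_toReal_le g3 (by positivity)).2 (by linarith)
  rintro t μ ⟨hμ, -⟩ Z hZ
  refine ⟨⟨?_, ?_⟩, ?_⟩
  · refine (part1 m t hm Z hZ).trans ?_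
    rw [hM1]; gcongr
  · refine (part2 m δ t μ h0 h1 hμ Z hZ).trans ?_
    rw [hM2]
    exact mul_le_mul' b2 le_add_self
  · refine (part3 m δ t μ h0 h1 hμ Z hZ).trans ?_
    rw [hM3]; gcongr
end
end
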